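/- Let G be an Artin group of large type with standard generators x_1,...,x_n and A = {x_1^{±1},...,x_n^{±1}}. If w is a word over A and a ∈ A is a letter such that the word wa is geodesic, then for every integer k ≥ 1 the word w a^k is geodesic. -/

import Mathlib

namespace ArtinRD

/-- The alternating product `xyxy...` with `m` factors, starting with `x`. -/
def altProd {G : Type*} [Monoid G] : ℕ → G → G → G
  | 0, _, _ => 1
  | n + 1, x, y => x * altProd n y x

/-- The Artin relators determined by a Coxeter-type matrix `M` (`⊤` meaning `∞`). -/
def artinRels (n : ℕ) (M : Fin n → Fin n → ℕ∞) : Set (FreeGroup (Fin n)) :=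
  {r | ∃ i j : Fin n, i ≠ j ∧ ∃ m : ℕ, M i j = (m : ℕ∞) ∧
    r = altProd m (FreeGroup.of i) (FreeGroup.of j) *
        (altProd m (FreeGroup.of j) (FreeGroup.of i))⁻¹}

/-- The Artin group associated to the matrix `M`. -/
abbrev ArtinGroup (n : ℕ) (M : Fin n → Fin n → ℕ∞) : Type := PresentedGroup (artinRels n M)

/-- The standard generator `x_i` of the Artin group. -/
def gen (n : ℕ) (M : Fin n → Fin n → ℕ∞) (i : Fin n) : ArtinGroup n M := PresentedGroup.of i

/-- The set `A = {x_1^{±1}, ..., x_n^{±1}}` of standard letters. -/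
def genSet (n : ℕ) (M : Fin n → Fin n → ℕ∞) : Set (ArtinGroup n M) :=
  {g | ∃ i : Fin n, g = gen n M i ∨ g = (gen n M i)⁻¹}

/-- Word length of `g` with respect to a set `S`: the least `N` such that `g` is a
product of `N` elements of `S`. -/
noncomputable def wordLength {G : Type*} [Group G] (S : Set G) (g : G) : ℕ :=
  sInf {N : ℕ | ∃ w : List G, (∀ a ∈ w, a ∈ S) ∧ w.length = N ∧ w.prod = g}

/-- The word length on an Artin group with respect to the standard letters. -/
noncomputable def ℓA (n : ℕ) (M : Fin n → Fin n → ℕ∞) : ArtinGroup n M → ℕ :=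
  wordLength (genSet n M)

/-- A letter: a generator index together with a sign (`true` = positive). -/
abbrev Letter (n : ℕ) := Fin n × Bool

/-- The group element corresponding to a letter. -/
def toGen (n : ℕ) (M : Fin n → Fin n → ℕ∞) (l : Letter n) : ArtinGroup n M :=
  if l.2 then gen n M l.1 else (gen n M l.1)⁻¹

/-- The group element represented by a word over the letters. -/
def wordElt (n : ℕ) (M : Fin n → Fin n → ℕ∞) (w : List (Letter n)) : ArtinGroup n M :=
  (w.map (toGen n M)).prod

/-- A word is geodesic if its length equals the word length of the element it represents. -/
def IsGeodesic (n : ℕ) (M : Fin n → Fin n → ℕ∞) (w : List (Letter n)) : Prop :=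
  wordLength (genSet n M) (wordElt n M w) = w.length


/-!
Along each orbit `{g x_i ^ t}` the word length of an Artin group of large type is
`t ↦ ℓ₀ + |t - t₀|`: once multiplication by a letter makes an element longer, each further
multiplication by that letter makes it longer by one. This is clear in a dihedral Artin group from
the Garside normal form, and the general case is assembled from the dihedral subgroups.

A normal form is a left-multiplied product of pieces, each a power of a generator or an element of
the dihedral subgroup of a pair of generators, in which every piece is separated from the previous
ones. For every pair `p`, a normal form splits as head times gate, where the gate is the shortest
element of its coset under the dihedral subgroup of `p`, and lengths add. Changing the head makes
the generators act on normal forms; two generators act through the heads on their own pair, so the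
braid relations hold. The group therefore acts simply transitively on normal forms, and word length
is the length of the normal form, which inherits the shape above from the dihedral subgroups.
Large type is what makes the normal forms exist: in a dihedral Artin group with `m ≥ 3`, the element
`x ^ t * y ^ f` with `t ≠ 0` admits no shortening by a power of `y` on the left.
-/

/-! ### Unimodal permutations -/

/-- A permutation `f` is unimodal for the length `ℓ` if `ℓ` changes by exactly one at each step
along an `f`-orbit and has no local maximum there. Hence on each orbit `ℓ` is
`t ↦ ℓ₀ + |t - t₀|`. -/
structure IsUnimodal {S : Type*} (ℓ : S → ℕ) (f : Equiv.Perm S) : Prop where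
  step : ∀ z, ℓ (f z) = ℓ z + 1 ∨ ℓ z = ℓ (f z) + 1
  no_peak : ∀ z, ¬(ℓ (f z) < ℓ z ∧ ℓ (f⁻¹ z) < ℓ z)

namespace IsUnimodal

variable {S : Type*} {ℓ : S → ℕ} {f : Equiv.Perm S}

theorem inv (hf : IsUnimodal ℓ f) : IsUnimodal ℓ f⁻¹ where
  step z := by
    have h := hf.step (f⁻¹ z)
    rw [show f (f⁻¹ z) = z from f.apply_symm_apply z] at h
    exact h.symm
  no_peak z h := hf.no_peak z ⟨by simpa using h.2, h.1⟩

theorem of_semiconj {S' : Type*} {f' : Equiv.Perm S'} {π : S' → S} (hf : IsUnimodal ℓ f)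
    (h : Function.Semiconj π f' f) : IsUnimodal (ℓ ∘ π) f' where
  step z := by simpa only [Function.comp_apply, h z] using hf.step (π z)
  no_peak z := by
    have hinv : π (f'⁻¹ z) = f⁻¹ (π z) := by
      rw [Equiv.Perm.eq_inv_iff_eq, ← h (f'⁻¹ z), Equiv.Perm.coe_inv,
        Equiv.apply_symm_apply]
    simpa only [Function.comp_apply, h z, hinv] using hf.no_peak (π z)

variable (hf : IsUnimodal ℓ f)
include hf

theorem lt_of_le {z : S} (h : ℓ z ≤ ℓ (f z)) : ℓ z < ℓ (f z) := by
  have := hf.step z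
  omega

theorem len_lt_len_pow_succ {z : S} (h : ℓ z < ℓ (f z)) (n : ℕ) :
    ℓ ((f ^ n) z) < ℓ ((f ^ (n + 1)) z) := by
  induction n with
  | zero => simpa using h
  | succ n ih =>
    have hpeak := hf.no_peak ((f ^ (n + 1)) z)
    rw [← Equiv.Perm.mul_apply, ← Equiv.Perm.mul_apply, ← pow_succ', pow_succ' f n,
      inv_mul_cancel_left, ← pow_succ'] at hpeak
    have hstep := hf.step ((f ^ (n + 1)) z)
    rw [← Equiv.Perm.mul_apply, ← pow_succ'] at hstep
    omega

theorem len_pow {z : S} (h : ℓ z < ℓ (f z)) (n : ℕ) : ℓ ((f ^ n) z) = ℓ z + n := by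
  induction n with
  | zero => rfl
  | succ n ih =>
    have hlt := hf.len_lt_len_pow_succ h n
    have hstep := hf.step ((f ^ n) z)
    rw [← Equiv.Perm.mul_apply, ← pow_succ'] at hstep
    omega

theorem len_zpow {z : S} (h : ℓ z < ℓ (f z)) (h' : ℓ z < ℓ (f⁻¹ z)) (t : ℤ) :
    ℓ ((f ^ t) z) = ℓ z + t.natAbs := by
  obtain ⟨n, rfl | rfl⟩ := t.eq_nat_or_neg
  · simpa using hf.len_pow h n
  · simpa using hf.inv.len_pow h' n

theorem exists_len_zpow (z : S) :
    ∃ k : ℤ, ∀ t : ℤ, ℓ ((f ^ t) ((f ^ (-k)) z)) = ℓ ((f ^ (-k)) z) + t.natAbs := by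
  let ν : ℤ → ℕ := fun k => ℓ ((f ^ (-k)) z)
  have hmin : ∀ k, ν (Function.argmin ν) ≤ ν k := fun k => Function.argmin_le ν k
  refine ⟨Function.argmin ν, hf.len_zpow (hf.lt_of_le ?_) (hf.inv.lt_of_le ?_)⟩
  · convert hmin (Function.argmin ν - 1) using 2
    rw [neg_sub, sub_eq_add_neg, zpow_one_add, Equiv.Perm.mul_apply]
  · convert hmin (Function.argmin ν + 1) using 2
    rw [neg_add_rev, zpow_add, zpow_neg_one, Equiv.Perm.mul_apply]

/-- The signed distance from the shortest point of the `f`-orbit of `z` to `z`. -/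
noncomputable def exponent (z : S) : ℤ := (hf.exists_len_zpow z).choose

/-- The shortest point of the `f`-orbit of `z`. -/
noncomputable def core (z : S) : S := (f ^ (-hf.exponent z)) z

theorem len_zpow_core (z : S) (t : ℤ) :
    ℓ ((f ^ t) (hf.core z)) = ℓ (hf.core z) + t.natAbs :=
  (hf.exists_len_zpow z).choose_spec t

theorem zpow_exponent_core (z : S) : (f ^ hf.exponent z) (hf.core z) = z := by
  rw [core, ← Equiv.Perm.mul_apply, ← zpow_add, add_neg_cancel, zpow_zero, Equiv.Perm.one_apply]

theorem len_eq (z : S) : ℓ z = ℓ (hf.core z) + (hf.exponent z).natAbs := by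
  rw [← hf.len_zpow_core, hf.zpow_exponent_core]

theorem exponent_unique {z : S} {k : ℤ}
    (h : ∀ t : ℤ, ℓ ((f ^ t) ((f ^ (-k)) z)) = ℓ ((f ^ (-k)) z) + t.natAbs) :
    hf.exponent z = k := by
  have hcore := hf.len_zpow_core z (hf.exponent z - k)
  have hk := h (k - hf.exponent z)
  rw [core, ← Equiv.Perm.mul_apply, ← zpow_add,
    show hf.exponent z - k + -hf.exponent z = -k by ring] at hcore
  rw [← Equiv.Perm.mul_apply, ← zpow_add,
    show k - hf.exponent z + -k = -hf.exponent z by ring] at hk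
  omega

theorem exponent_eq_zero {z : S} (h : ℓ z < ℓ (f z)) (h' : ℓ z < ℓ (f⁻¹ z)) :
    hf.exponent z = 0 :=
  hf.exponent_unique <| by simpa using hf.len_zpow h h'

theorem core_eq_self {z : S} (h : hf.exponent z = 0) : hf.core z = z := by simp [core, h]

theorem lt_len_of_exponent_eq_zero {z : S} (h : hf.exponent z = 0) :
    ℓ z < ℓ (f z) ∧ ℓ z < ℓ (f⁻¹ z) := by
  have hpos := hf.len_zpow_core z 1
  have hneg := hf.len_zpow_core z (-1)
  rw [hf.core_eq_self h] at hpos hneg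
  simp only [zpow_one, zpow_neg_one, Int.natAbs_one, Int.natAbs_neg] at hpos hneg
  omega

theorem len_core_lt {z : S} (h : hf.exponent z ≠ 0) : ℓ (hf.core z) < ℓ z := by
  have := hf.len_eq z
  omega

theorem exponent_zpow (t : ℤ) (z : S) : hf.exponent ((f ^ t) z) = hf.exponent z + t := by
  refine hf.exponent_unique fun s => ?_
  rw [← Equiv.Perm.mul_apply (f ^ (-(hf.exponent z + t))), ← zpow_add,
    show -(hf.exponent z + t) + t = -hf.exponent z by ring]
  exact hf.len_zpow_core z s

theorem core_zpow (t : ℤ) (z : S) : hf.core ((f ^ t) z) = hf.core z := by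
  rw [core, hf.exponent_zpow, ← Equiv.Perm.mul_apply, ← zpow_add, core,
    show -(hf.exponent z + t) + t = -hf.exponent z by ring]

theorem exponent_core (z : S) : hf.exponent (hf.core z) = 0 := by
  rw [core, hf.exponent_zpow, add_neg_cancel]

theorem exponent_zpow_of_eq_zero {z : S} (h : hf.exponent z = 0) (t : ℤ) :
    hf.exponent ((f ^ t) z) = t := by
  rw [hf.exponent_zpow, h, zero_add]

theorem core_zpow_of_exponent_eq_zero {z : S} (h : hf.exponent z = 0) (t : ℤ) :
    hf.core ((f ^ t) z) = z := by
  rw [hf.core_zpow, hf.core_eq_self h]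

theorem len_zpow_of_exponent_eq_zero {z : S} (h : hf.exponent z = 0) (t : ℤ) :
    ℓ ((f ^ t) z) = ℓ z + t.natAbs := by
  rw [hf.len_eq, hf.core_zpow_of_exponent_eq_zero h, hf.exponent_zpow_of_eq_zero h]

theorem len_zpow_le (t : ℤ) (z : S) : ℓ ((f ^ t) z) ≤ ℓ z + t.natAbs := by
  rw [hf.len_eq, hf.len_eq z, hf.exponent_zpow, hf.core_zpow]
  omega

end IsUnimodal

/-! ### Combinatorial models of dihedral pieces -/

/-- A combinatorial model of a group generated by two elements `u false` and `u true`: a set `S`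
on which two permutations `act b` imitate left multiplication by `u b`, with a base point playing
the role of the identity and a length function that is unimodal for both permutations.
`descent` says that the base point is the only local minimum of `len`; `ascent`, which encodes
the large-type hypothesis, says that `u b ^ t * u (!b) ^ f` is strictly shortest in its orbit
under `u (!b)` if `t ≠ 0`. -/
structure DihedralModel {Γ : Type*} [Group Γ] (u : Bool → Γ) where
  S : Type
  base : S
  act : Bool → Equiv.Perm S
  len : S → ℕ
  eval : S → Γ
  len_base : len base = 0
  eval_base : eval base = 1
  eval_act : ∀ b z, eval (act b z) = u b * eval z
  unimodal : ∀ b, IsUnimodal len (act b)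
  descent : ∀ z, z ≠ base → ∃ b, len (act b z) < len z ∨ len ((act b)⁻¹ z) < len z
  ascent : ∀ b (t f : ℤ) z, t ≠ 0 → z = (act b ^ t) ((act (!b) ^ f) base) →
    len z < len (act (!b) z) ∧ len z < len ((act (!b))⁻¹ z)

namespace DihedralModel

variable {Γ : Type*} [Group Γ] {u : Bool → Γ} (D : DihedralModel u)

theorem eval_zpow (b : Bool) (t : ℤ) (z : D.S) : D.eval ((D.act b ^ t) z) = u b ^ t * D.eval z := by
  induction t generalizing z with
  | zero => simp
  | succ t ih => rw [zpow_add_one, Equiv.Perm.mul_apply, ih, D.eval_act, zpow_add_one, mul_assoc]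
  | pred t ih =>
    have hinv : D.eval ((D.act b)⁻¹ z) = (u b)⁻¹ * D.eval z := by
      rw [eq_inv_mul_iff_mul_eq, ← D.eval_act, Equiv.Perm.coe_inv, Equiv.apply_symm_apply]
    rw [zpow_sub_one, Equiv.Perm.mul_apply, ih, hinv, zpow_sub_one, mul_assoc]

theorem eval_eq_zpow_mul_core (b : Bool) (z : D.S) :
    D.eval z = u b ^ (D.unimodal b).exponent z * D.eval ((D.unimodal b).core z) := by
  rw [← D.eval_zpow, (D.unimodal b).zpow_exponent_core]

theorem exponent_base (b : Bool) : (D.unimodal b).exponent D.base = 0 :=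
  (D.unimodal b).exponent_eq_zero
    ((D.unimodal b).lt_of_le (D.len_base.trans_le (Nat.zero_le _)))
    ((D.unimodal b).inv.lt_of_le (D.len_base.trans_le (Nat.zero_le _)))

theorem ne_base_of_exponent_ne_zero {b : Bool} {z : D.S} (h : (D.unimodal b).exponent z ≠ 0) :
    z ≠ D.base := by
  rintro rfl
  exact h (D.exponent_base b)

theorem exponent_not_zpow_zpow_base (b : Bool) {t : ℤ} (ht : t ≠ 0) (f : ℤ) :
    (D.unimodal (!b)).exponent ((D.act b ^ t) ((D.act (!b) ^ f) D.base)) = 0 :=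
  have h := D.ascent b t f _ ht rfl
  (D.unimodal (!b)).exponent_eq_zero h.1 h.2

theorem exponent_not_zpow_base (b : Bool) (t : ℤ) :
    (D.unimodal (!b)).exponent ((D.act b ^ t) D.base) = 0 := by
  obtain rfl | ht := eq_or_ne t 0
  · exact D.exponent_base (!b)
  · exact D.exponent_not_zpow_zpow_base b ht 0

theorem eq_base_of_exponent_eq_zero {z : D.S} (h : ∀ b, (D.unimodal b).exponent z = 0) :
    z = D.base := by
  by_contra hz
  obtain ⟨b, hb⟩ := D.descent z hz
  have := (D.unimodal b).lt_len_of_exponent_eq_zero (h b)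
  omega

end DihedralModel

/-! ### Systems of dihedral models and normal forms -/

/-- Elements `γ i` of a group together with a dihedral model for each of a family of pairs of
indices. A pair `p` is called a line with the two points `pt p false` and `pt p true`; distinct
lines share at most one point, and every index lies on some line. -/
structure DihedralSystem (ι : Type*) (Γ : Type*) [Group Γ] where
  γ : ι → Γ
  Line : Type
  pt : Line → Bool → ι
  model : ∀ p, DihedralModel (fun b => γ (pt p b))
  pt_injective : ∀ p, Function.Injective (pt p)
  line_eq : ∀ {p q b c c'}, pt p b = pt q c → pt p (!b) = pt q c' → p = q
  exists_pt : ∀ i, ∃ p b, pt p b = i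

namespace DihedralSystem

variable {ι Γ : Type*} [Group Γ] {Q : DihedralSystem ι Γ}

theorem eq_of_pt_eq {p q : Q.Line} (hpq : q ≠ p) {b c b' c' : Bool} (h : Q.pt p b = Q.pt q c)
    (h' : Q.pt p b' = Q.pt q c') : b' = b ∧ c' = c := by
  obtain rfl | rfl := Bool.eq_or_eq_not b' b
  · exact ⟨rfl, Q.pt_injective q (h'.symm.trans h)⟩
  · exact absurd (Q.line_eq h h').symm hpq

theorem line_cases (p q : Q.Line) : q = p ∨
    (q ≠ p ∧ ∃ b c, Q.pt p b = Q.pt q c) ∨ (q ≠ p ∧ ∀ b c, Q.pt p b ≠ Q.pt q c) := by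
  by_cases hpq : q = p
  · exact .inl hpq
  · by_cases hs : ∃ b c, Q.pt p b = Q.pt q c
    · exact .inr (.inl ⟨hpq, hs⟩)
    · exact .inr (.inr ⟨hpq, by simpa using hs⟩)

end DihedralSystem

/-- Iterated products of powers of the `γ i` and of elements of the dihedral models, each new
factor being multiplied on the left. -/
inductive NormalForm {ι Γ : Type*} [Group Γ] (Q : DihedralSystem ι Γ) where
  | one : NormalForm Q
  | cyclic (x : NormalForm Q) (i : ι) (t : ℤ) : NormalForm Q
  | dihedral (x : NormalForm Q) (p : Q.Line) (z : (Q.model p).S) : NormalForm Q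

namespace NormalForm

variable {ι Γ : Type*} [Group Γ] {Q : DihedralSystem ι Γ}

/-- The length of a product of pieces is the sum of the lengths of the pieces. -/
def len : NormalForm Q → ℕ
  | one => 0
  | cyclic x _ t => len x + t.natAbs
  | dihedral x p z => len x + (Q.model p).len z

/-- The group element represented by a product of pieces. -/
def eval : NormalForm Q → Γ
  | one => 1
  | cyclic x i t => Q.γ i ^ t * eval x
  | dihedral x p z => (Q.model p).eval z * eval x

open Classical in
/-- The exponent of `γ j` that can be split off on the left, as read off from the last piece. -/
noncomputable def exponent : NormalForm Q → ι → ℤ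
  | one, _ => 0
  | cyclic _ i t, j => if i = j then t else 0
  | dihedral _ q z, j =>
    if hb : ∃ b, Q.pt q b = j then ((Q.model q).unimodal hb.choose).exponent z else 0

open Classical in
/-- The factor from the model of the line `p` that can be split off on the left. -/
noncomputable def head : NormalForm Q → (p : Q.Line) → (Q.model p).S
  | one, p => (Q.model p).base
  | cyclic x i t, p =>
    if hb : ∃ b, Q.pt p b = i then ((Q.model p).act hb.choose ^ t) (head x p)
    else (Q.model p).base
  | dihedral _ q z, p =>
    if hq : q = p then hq ▸ z
    else if hb : ∃ bc : Bool × Bool, Q.pt p bc.1 = Q.pt q bc.2 then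
      ((Q.model p).act hb.choose.1 ^ ((Q.model q).unimodal hb.choose.2).exponent z)
        (Q.model p).base
    else (Q.model p).base

theorem exponent_cyclic_self (x : NormalForm Q) (i : ι) (t : ℤ) :
    (cyclic x i t).exponent i = t := by
  simp [exponent]

theorem exponent_cyclic_of_ne (x : NormalForm Q) {i j : ι} (t : ℤ) (hij : i ≠ j) :
    (cyclic x i t).exponent j = 0 := by
  simp [exponent, hij]

theorem exponent_dihedral (x : NormalForm Q) (p : Q.Line) (z : (Q.model p).S) (b : Bool) :
    (dihedral x p z).exponent (Q.pt p b) = ((Q.model p).unimodal b).exponent z := by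
  have hb : ∃ c, Q.pt p c = Q.pt p b := ⟨b, rfl⟩
  simp only [exponent, dif_pos hb, Q.pt_injective p hb.choose_spec]

theorem exponent_dihedral_of_ne (x : NormalForm Q) (p : Q.Line) (z : (Q.model p).S) {j : ι}
    (hj : ∀ b, Q.pt p b ≠ j) : (dihedral x p z).exponent j = 0 := by
  rw [exponent, dif_neg (not_exists.mpr hj)]

theorem head_cyclic (x : NormalForm Q) (p : Q.Line) (b : Bool) (t : ℤ) :
    (cyclic x (Q.pt p b) t).head p = ((Q.model p).act b ^ t) (x.head p) := by
  have hb : ∃ c, Q.pt p c = Q.pt p b := ⟨b, rfl⟩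
  rw [head, dif_pos hb, Q.pt_injective p hb.choose_spec]

theorem head_cyclic_of_ne (x : NormalForm Q) {i : ι} {p : Q.Line} (t : ℤ)
    (hi : ∀ b, Q.pt p b ≠ i) : (cyclic x i t).head p = (Q.model p).base := by
  rw [head, dif_neg (not_exists.mpr hi)]

theorem head_dihedral (x : NormalForm Q) (p : Q.Line) (z : (Q.model p).S) :
    (dihedral x p z).head p = z := by
  simp [head]

theorem head_dihedral_of_pt_eq (x : NormalForm Q) {p q : Q.Line} (z : (Q.model q).S)
    (hpq : q ≠ p) {b c : Bool} (hbc : Q.pt p b = Q.pt q c) :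
    (dihedral x q z).head p =
      ((Q.model p).act b ^ ((Q.model q).unimodal c).exponent z) (Q.model p).base := by
  have hb : ∃ bc : Bool × Bool, Q.pt p bc.1 = Q.pt q bc.2 := ⟨(b, c), hbc⟩
  have hch := DihedralSystem.eq_of_pt_eq hpq hbc hb.choose_spec
  simp only [head, dif_neg hpq, dif_pos hb, hch.1, hch.2]

theorem head_dihedral_of_pt_ne (x : NormalForm Q) {p q : Q.Line} (z : (Q.model q).S)
    (hpq : q ≠ p) (hbc : ∀ b c, Q.pt p b ≠ Q.pt q c) :
    (dihedral x q z).head p = (Q.model p).base := by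
  rw [head, dif_neg hpq, dif_neg (by simpa using hbc)]

/-- Validity of a normal form: no piece can be merged with the previous ones. A power of `γ i` must
not combine with the next head into a properly dihedral element, and a dihedral piece must be
properly dihedral, that is, have non-zero exponents for both generators. -/
def IsValid : NormalForm Q → Prop
  | one => True
  | cyclic x i t => IsValid x ∧ t ≠ 0 ∧ x.exponent i = 0 ∧ ∀ p b, Q.pt p b = i →
      ((Q.model p).unimodal (!b)).exponent (((Q.model p).act b ^ t) (x.head p)) = 0
  | dihedral x p z => IsValid x ∧ (∀ b, x.exponent (Q.pt p b) = 0) ∧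
      ∀ b, ((Q.model p).unimodal b).exponent z ≠ 0

theorem exponent_head_cyclic {x : NormalForm Q} {i : ι} {t : ℤ} (h : (cyclic x i t).IsValid)
    (hx : ∀ p b, ((Q.model p).unimodal b).exponent (x.head p) = x.exponent (Q.pt p b))
    (p : Q.Line) (b : Bool) : ((Q.model p).unimodal b).exponent ((cyclic x i t).head p) =
      (cyclic x i t).exponent (Q.pt p b) := by
  obtain ⟨-, -, hexp, hcrit⟩ := h
  by_cases hi : ∃ c, Q.pt p c = i
  · obtain ⟨c, rfl⟩ := hi
    rw [head_cyclic]
    obtain rfl | rfl := Bool.eq_or_eq_not b c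
    · rw [IsUnimodal.exponent_zpow, hx, hexp, exponent_cyclic_self, zero_add]
    · rw [hcrit p c rfl,
        exponent_cyclic_of_ne _ _ fun h => Bool.not_ne_self c (Q.pt_injective p h.symm)]
  · push Not at hi
    rw [head_cyclic_of_ne _ _ hi, DihedralModel.exponent_base,
      exponent_cyclic_of_ne _ _ (hi b).symm]

theorem exponent_head_dihedral (x : NormalForm Q) (q : Q.Line) (z : (Q.model q).S)
    (p : Q.Line) (b : Bool) : ((Q.model p).unimodal b).exponent ((dihedral x q z).head p) =
      (dihedral x q z).exponent (Q.pt p b) := by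
  obtain rfl | ⟨hpq, b', c, hbc⟩ | ⟨hpq, hs⟩ := DihedralSystem.line_cases p q
  · rw [head_dihedral, exponent_dihedral]
  · rw [head_dihedral_of_pt_eq _ _ hpq hbc]
    obtain rfl | rfl := Bool.eq_or_eq_not b b'
    · rw [IsUnimodal.exponent_zpow, DihedralModel.exponent_base, zero_add, hbc, exponent_dihedral]
    · rw [DihedralModel.exponent_not_zpow_base, exponent_dihedral_of_ne]
      exact fun c' hc' =>
        Bool.not_ne_self b' (DihedralSystem.eq_of_pt_eq hpq hbc hc'.symm).1
  · rw [head_dihedral_of_pt_ne _ _ hpq hs, DihedralModel.exponent_base,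
      exponent_dihedral_of_ne _ _ _ fun c => (hs b c).symm]

theorem exponent_head {x : NormalForm Q} (hx : x.IsValid) (p : Q.Line) (b : Bool) :
    ((Q.model p).unimodal b).exponent (x.head p) = x.exponent (Q.pt p b) := by
  induction x generalizing p b with
  | one => simp only [head, exponent, DihedralModel.exponent_base]
  | cyclic x i t ih => exact exponent_head_cyclic hx (ih hx.1) p b
  | dihedral x q z => exact exponent_head_dihedral x q z p b

theorem head_eq_base {x : NormalForm Q} (hx : x.IsValid) {p : Q.Line}
    (hexp : ∀ b, x.exponent (Q.pt p b) = 0) : x.head p = (Q.model p).base :=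
  (Q.model p).eq_base_of_exponent_eq_zero fun b => by rw [exponent_head hx, hexp]

/-- Multiplying `y` by the `t`-th power of the point `b` of the line `p` creates a properly
dihedral head. -/
def IsCritical (y : NormalForm Q) (t : ℤ) (p : Q.Line) (b : Bool) : Prop :=
  ((Q.model p).unimodal (!b)).exponent (((Q.model p).act b ^ t) (y.head p)) ≠ 0

open Classical in
/-- Multiplication of `y` by the `t`-th power of `γ i`, given the gates `g` of `y`. -/
noncomputable def pushWith (g : Q.Line → NormalForm Q) (y : NormalForm Q) (i : ι) (t : ℤ) :
    NormalForm Q :=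
  if t = 0 then y
  else if hc : ∃ pb : Q.Line × Bool, Q.pt pb.1 pb.2 = i ∧ y.IsCritical t pb.1 pb.2 then
    dihedral (g hc.choose.1) hc.choose.1
      (((Q.model hc.choose.1).act hc.choose.2 ^ t) (y.head hc.choose.1))
  else cyclic y i t

open Classical in
/-- Multiplication of `x` by an element `z` of the model of the line `p`, given the gates `g`
of `x`. -/
noncomputable def attachWith (g : Q.Line → NormalForm Q) (p : Q.Line) (x : NormalForm Q)
    (z : (Q.model p).S) : NormalForm Q :=
  if hb : ∃ b, ((Q.model p).unimodal b).exponent z ≠ 0 ∧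
      ((Q.model p).unimodal (!b)).exponent z = 0 then
    let c := ((Q.model p).unimodal hb.choose).core z
    let t := ((Q.model p).unimodal hb.choose).exponent z
    if c = (Q.model p).base then pushWith g x (Q.pt p hb.choose) t
    else cyclic (attachWith g p x c) (Q.pt p hb.choose) t
  else if z = (Q.model p).base then x
  else dihedral x p z
termination_by (Q.model p).len z
decreasing_by exact IsUnimodal.len_core_lt _ hb.choose_spec.1

open Classical in
/-- The gate of a normal form on the line `p`: what remains after splitting off its head. It
represents the shortest element of the coset of the dihedral subgroup of `p`. -/
noncomputable def gate : NormalForm Q → Q.Line → NormalForm Q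
  | one, _ => one
  | cyclic x i t, p => if ∃ b, Q.pt p b = i then gate x p else cyclic x i t
  | dihedral x q z, p =>
    if q = p then x
    else if hb : ∃ c b, Q.pt p b = Q.pt q c then
      attachWith (gate x) q x (((Q.model q).unimodal hb.choose).core z)
    else dihedral x q z

/-- Multiplication of a normal form by the `t`-th power of `γ i`. -/
noncomputable def push (y : NormalForm Q) (i : ι) (t : ℤ) : NormalForm Q := pushWith y.gate y i t

/-- Multiplication of a normal form by an element of the model of the line `p`. -/
noncomputable def attach (p : Q.Line) (x : NormalForm Q) (z : (Q.model p).S) : NormalForm Q :=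
  attachWith x.gate p x z

theorem gate_cyclic (x : NormalForm Q) (p : Q.Line) (b : Bool) (t : ℤ) :
    (cyclic x (Q.pt p b) t).gate p = x.gate p := by
  rw [gate, if_pos ⟨b, rfl⟩]

theorem gate_cyclic_of_ne (x : NormalForm Q) {i : ι} {p : Q.Line} (t : ℤ)
    (hi : ∀ b, Q.pt p b ≠ i) : (cyclic x i t).gate p = cyclic x i t := by
  rw [gate, if_neg (not_exists.mpr hi)]

theorem gate_dihedral (x : NormalForm Q) (p : Q.Line) (z : (Q.model p).S) :
    (dihedral x p z).gate p = x := by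
  simp [gate]

theorem gate_dihedral_of_pt_eq (x : NormalForm Q) {p q : Q.Line} (z : (Q.model q).S)
    (hpq : q ≠ p) {b c : Bool} (hbc : Q.pt p b = Q.pt q c) :
    (dihedral x q z).gate p = attach q x (((Q.model q).unimodal c).core z) := by
  have hb : ∃ c b, Q.pt p b = Q.pt q c := ⟨c, b, hbc⟩
  simp only [gate, if_neg hpq, dif_pos hb, attach,
    (DihedralSystem.eq_of_pt_eq hpq hbc hb.choose_spec.choose_spec).2]

theorem gate_dihedral_of_pt_ne (x : NormalForm Q) {p q : Q.Line} (z : (Q.model q).S)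
    (hpq : q ≠ p) (hbc : ∀ b c, Q.pt p b ≠ Q.pt q c) :
    (dihedral x q z).gate p = dihedral x q z := by
  rw [gate, if_neg hpq, dif_neg fun ⟨c, b, h⟩ => hbc b c h]

theorem push_zero (y : NormalForm Q) (i : ι) : y.push i 0 = y := by simp [push, pushWith]

theorem exists_eq_cyclic_of_isCritical {y : NormalForm Q} (hy : y.IsValid) {t : ℤ}
    (ht : t ≠ 0) {p : Q.Line} {b : Bool} (hexp : y.exponent (Q.pt p b) = 0)
    (hc : y.IsCritical t p b) : ∃ x f, y = cyclic x (Q.pt p (!b)) f := by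
  contrapose! hc
  rw [IsCritical, not_not]
  cases y with
  | one => exact (Q.model p).exponent_not_zpow_base b t
  | cyclic x j f =>
    rw [head_cyclic_of_ne, DihedralModel.exponent_not_zpow_base]
    rintro c rfl
    obtain rfl | rfl := Bool.eq_or_eq_not c b
    · exact hy.2.1 (by rwa [exponent_cyclic_self] at hexp)
    · exact hc x f rfl
  | dihedral x q z =>
    obtain rfl | ⟨hpq, b', c, hbc⟩ | ⟨hpq, hs⟩ := DihedralSystem.line_cases p q
    · exact absurd (by rwa [exponent_dihedral] at hexp) (hy.2.2 b)
    · rw [head_dihedral_of_pt_eq _ _ hpq hbc]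
      obtain rfl | rfl := Bool.eq_or_eq_not b' b
      · exact absurd (by rwa [hbc, exponent_dihedral] at hexp) (hy.2.2 c)
      · exact (Q.model p).exponent_not_zpow_zpow_base b ht _
    · rw [head_dihedral_of_pt_ne _ _ hpq hs, DihedralModel.exponent_not_zpow_base]

theorem isCritical_unique {y : NormalForm Q} (hy : y.IsValid) {t : ℤ} (ht : t ≠ 0) {p q : Q.Line}
    {b c : Bool} (hpq : Q.pt p b = Q.pt q c) (hexp : y.exponent (Q.pt p b) = 0)
    (hp : y.IsCritical t p b) (hq : y.IsCritical t q c) : (p, b) = (q, c) := by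
  obtain ⟨x, f, rfl⟩ := exists_eq_cyclic_of_isCritical hy ht hexp hp
  obtain ⟨x', f', hx'⟩ := exists_eq_cyclic_of_isCritical hy ht (hpq ▸ hexp) hq
  have hpq' : Q.pt p (!b) = Q.pt q (!c) := by injection hx'
  obtain rfl := Q.line_eq hpq hpq'
  rw [Q.pt_injective p hpq]

theorem push_of_isCritical {y : NormalForm Q} (hy : y.IsValid) {t : ℤ} (ht : t ≠ 0) {p : Q.Line}
    {b : Bool} (hexp : y.exponent (Q.pt p b) = 0) (hc : y.IsCritical t p b) :
    y.push (Q.pt p b) t = dihedral (y.gate p) p (((Q.model p).act b ^ t) (y.head p)) := by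
  have hex : ∃ qc : Q.Line × Bool, Q.pt qc.1 qc.2 = Q.pt p b ∧ y.IsCritical t qc.1 qc.2 :=
    ⟨(p, b), rfl, hc⟩
  have huniq : (p, b) = hex.choose :=
    isCritical_unique hy ht hex.choose_spec.1.symm hexp hc hex.choose_spec.2
  rw [push, pushWith, if_neg ht, dif_pos hex, ← huniq]

theorem push_of_not_isCritical (y : NormalForm Q) {i : ι} {t : ℤ} (ht : t ≠ 0)
    (hc : ∀ p b, Q.pt p b = i → ¬y.IsCritical t p b) : y.push i t = cyclic y i t := by
  rw [push, pushWith, if_neg ht, dif_neg fun ⟨pb, hi, h⟩ => hc pb.1 pb.2 hi h]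

theorem attach_base (p : Q.Line) (x : NormalForm Q) : attach p x (Q.model p).base = x := by
  rw [attach, attachWith, dif_neg fun ⟨b, hb, _⟩ => hb (DihedralModel.exponent_base _ b),
    if_pos rfl]

theorem attach_of_exponent_ne_zero (p : Q.Line) (x : NormalForm Q) {z : (Q.model p).S}
    (hz : ∀ b, ((Q.model p).unimodal b).exponent z ≠ 0) : attach p x z = dihedral x p z := by
  rw [attach, attachWith, dif_neg fun ⟨b, _, hb⟩ => hz _ hb,
    if_neg ((Q.model p).ne_base_of_exponent_ne_zero (hz true))]

open Classical in
theorem attach_of_exponent_eq_zero (p : Q.Line) (x : NormalForm Q) {z : (Q.model p).S} {b : Bool}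
    (hb : ((Q.model p).unimodal b).exponent z ≠ 0)
    (hb' : ((Q.model p).unimodal (!b)).exponent z = 0) :
    attach p x z =
      if ((Q.model p).unimodal b).core z = (Q.model p).base then
        x.push (Q.pt p b) (((Q.model p).unimodal b).exponent z)
      else cyclic (attach p x (((Q.model p).unimodal b).core z)) (Q.pt p b)
        (((Q.model p).unimodal b).exponent z) := by
  have hex : ∃ b, ((Q.model p).unimodal b).exponent z ≠ 0 ∧
      ((Q.model p).unimodal (!b)).exponent z = 0 := ⟨b, hb, hb'⟩
  have hch : hex.choose = b := by
    obtain h | h := Bool.eq_or_eq_not hex.choose b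
    · exact h
    · exact absurd (h ▸ hb') hex.choose_spec.1
  rw [attach, attachWith, dif_pos hex]
  simp only [hch, push, attach]

theorem not_isCritical_of_exponent_ne_zero {y : NormalForm Q} (hy : y.IsValid) {t : ℤ}
    (ht : t ≠ 0) {p : Q.Line} {b : Bool} (hb : y.exponent (Q.pt p b) = 0)
    (hb' : y.exponent (Q.pt p (!b)) ≠ 0) (hc : ¬y.IsCritical t p b) {q : Q.Line} {c : Bool}
    (hpq : Q.pt q c = Q.pt p b) : ¬y.IsCritical t q c := by
  intro hcrit
  obtain ⟨x, f, rfl⟩ := exists_eq_cyclic_of_isCritical hy ht (hpq ▸ hb) hcrit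
  have hpq' : Q.pt q (!c) = Q.pt p (!b) := by
    by_contra hne
    exact hb' (exponent_cyclic_of_ne _ _ hne)
  obtain rfl := Q.line_eq hpq hpq'
  exact hc (Q.pt_injective q hpq ▸ hcrit)

theorem attach_eq_push {p : Q.Line} {x : NormalForm Q} {z : (Q.model p).S} {b : Bool}
    (hb : ((Q.model p).unimodal b).exponent z ≠ 0)
    (hb' : ((Q.model p).unimodal (!b)).exponent z = 0)
    (hv : (attach p x (((Q.model p).unimodal b).core z)).IsValid)
    (hh : (attach p x (((Q.model p).unimodal b).core z)).head p =
      ((Q.model p).unimodal b).core z) :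
    attach p x z = (attach p x (((Q.model p).unimodal b).core z)).push (Q.pt p b)
      (((Q.model p).unimodal b).exponent z) := by
  rw [attach_of_exponent_eq_zero p x hb hb']
  split_ifs with hcore
  · rw [hcore, attach_base]
  · have hexp : ((Q.model p).unimodal b).exponent (((Q.model p).unimodal b).core z) = 0 :=
      IsUnimodal.exponent_core _ z
    refine (push_of_not_isCritical _ hb fun q c =>
      not_isCritical_of_exponent_ne_zero hv hb ?_ ?_ ?_).symm
    · rw [← exponent_head hv, hh, hexp]
    · rw [← exponent_head hv, hh]
      refine fun h => hcore ((Q.model p).eq_base_of_exponent_eq_zero fun d => ?_)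
      obtain rfl | rfl := Bool.eq_or_eq_not d b
      · exact hexp
      · exact h
    · rw [IsCritical, hh, IsUnimodal.zpow_exponent_core, not_not, hb']

/-- The normal forms that can be the gate of a normal form on the line `p`. -/
structure IsGate (x : NormalForm Q) (p : Q.Line) : Prop where
  isValid : x.IsValid
  exponent_eq_zero : ∀ b, x.exponent (Q.pt p b) = 0

/-- The decomposition of a normal form into its gate and its head on the line `p`. -/
structure GateSpec (y : NormalForm Q) (p : Q.Line) : Prop where
  isGate : (y.gate p).IsGate p
  attach_head : attach p (y.gate p) (y.head p) = y
  len_eq : y.len = (y.gate p).len + (Q.model p).len (y.head p)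
  eval_eq : y.eval = (Q.model p).eval (y.head p) * (y.gate p).eval

/-- The product of `x` and `z` is the normal form with gate `x` and head `z` on the line `p`. -/
structure AttachSpec (p : Q.Line) (x : NormalForm Q) (z : (Q.model p).S) : Prop where
  isValid : (attach p x z).IsValid
  head_eq : (attach p x z).head p = z
  gate_eq : (attach p x z).gate p = x
  len_eq : (attach p x z).len = x.len + (Q.model p).len z
  eval_eq : (attach p x z).eval = (Q.model p).eval z * x.eval

/-- Multiplication by a power of `γ i` only changes the heads on the lines through `i`. -/
structure PushSpec (y : NormalForm Q) (i : ι) (t : ℤ) : Prop where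
  isValid : (y.push i t).IsValid
  len_eq : (y.push i t).len = y.len + t.natAbs
  eval_eq : (y.push i t).eval = Q.γ i ^ t * y.eval
  head_eq : ∀ p b, Q.pt p b = i → (y.push i t).head p = ((Q.model p).act b ^ t) (y.head p)
  gate_eq : ∀ p b, Q.pt p b = i → (y.push i t).gate p = y.gate p

theorem gateSpec_of_trivial {y : NormalForm Q} {p : Q.Line} (hy : y.IsGate p) (hg : y.gate p = y)
    (hh : y.head p = (Q.model p).base) : GateSpec y p where
  isGate := by rwa [hg]
  attach_head := by rw [hg, hh, attach_base]
  len_eq := by rw [hg, hh, DihedralModel.len_base, add_zero]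
  eval_eq := by rw [hg, hh, DihedralModel.eval_base, one_mul]

theorem gateSpec_cyclic {x : NormalForm Q} {p : Q.Line} {b : Bool} {t : ℤ}
    (hy : (cyclic x (Q.pt p b) t).IsValid) (hx : GateSpec x p) :
    GateSpec (cyclic x (Q.pt p b) t) p := by
  obtain ⟨hv, ht, hexp, hcrit⟩ := hy
  have hexp' : ((Q.model p).unimodal b).exponent (x.head p) = 0 := by rw [exponent_head hv, hexp]
  have hcore := ((Q.model p).unimodal b).core_zpow_of_exponent_eq_zero hexp' t
  have hexpt := ((Q.model p).unimodal b).exponent_zpow_of_eq_zero hexp' t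
  constructor <;> rw [gate_cyclic]
  case isGate => exact hx.isGate
  all_goals rw [head_cyclic]
  case attach_head =>
    rw [attach_eq_push (by rwa [hexpt]) (hcrit p b rfl), hcore, hexpt, hx.attach_head]
    · exact push_of_not_isCritical _ ht fun q c hq => not_not_intro (hcrit q c hq)
    · rwa [hcore, hx.attach_head]
    · rw [hcore, hx.attach_head]
  case len_eq => rw [len, hx.len_eq, IsUnimodal.len_zpow_of_exponent_eq_zero _ hexp', add_assoc]
  case eval_eq => rw [eval, hx.eval_eq, DihedralModel.eval_zpow, mul_assoc]

theorem gateSpec_dihedral {x : NormalForm Q} {p : Q.Line} {z : (Q.model p).S}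
    (hy : (dihedral x p z).IsValid) : GateSpec (dihedral x p z) p where
  isGate := by rw [gate_dihedral]; exact ⟨hy.1, hy.2.1⟩
  attach_head := by rw [gate_dihedral, head_dihedral, attach_of_exponent_ne_zero _ _ hy.2.2]
  len_eq := by rw [gate_dihedral, head_dihedral, len]
  eval_eq := by rw [gate_dihedral, head_dihedral, eval]

theorem isCritical_attach_core {x : NormalForm Q} {q : Q.Line} {z : (Q.model q).S} {c : Bool}
    (hz : ((Q.model q).unimodal (!c)).exponent z ≠ 0)
    (hx : AttachSpec q x (((Q.model q).unimodal c).core z)) :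
    (attach q x (((Q.model q).unimodal c).core z)).IsCritical
      (((Q.model q).unimodal c).exponent z) q c := by
  rwa [IsCritical, hx.head_eq, IsUnimodal.zpow_exponent_core]

theorem AttachSpec.exponent_attach_core {x : NormalForm Q} {q : Q.Line} {z : (Q.model q).S}
    {c : Bool} (hx : AttachSpec q x (((Q.model q).unimodal c).core z)) :
    (attach q x (((Q.model q).unimodal c).core z)).exponent (Q.pt q c) = 0 := by
  rw [← exponent_head hx.isValid, hx.head_eq, IsUnimodal.exponent_core]

theorem isGate_attach_core {x : NormalForm Q} {p q : Q.Line} {z : (Q.model q).S} {b c : Bool}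
    (hpq : q ≠ p) (hbc : Q.pt p b = Q.pt q c) (hz : ∀ d, ((Q.model q).unimodal d).exponent z ≠ 0)
    (hx : AttachSpec q x (((Q.model q).unimodal c).core z)) :
    (attach q x (((Q.model q).unimodal c).core z)).IsGate p := by
  have hexp := hx.exponent_attach_core
  refine ⟨hx.isValid, fun d => ?_⟩
  obtain rfl | rfl := Bool.eq_or_eq_not d b
  · rw [hbc, hexp]
  · obtain ⟨x', g, hx'⟩ := exists_eq_cyclic_of_isCritical hx.isValid (hz c) hexp
      (isCritical_attach_core (hz _) hx)
    rw [hx', exponent_cyclic_of_ne]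
    exact fun h => hpq (Q.line_eq hbc h.symm).symm

theorem gateSpec_dihedral_of_pt_eq {x : NormalForm Q} {p q : Q.Line} {z : (Q.model q).S}
    {b c : Bool} (hy : (dihedral x q z).IsValid) (hpq : q ≠ p) (hbc : Q.pt p b = Q.pt q c)
    (hx : AttachSpec q x (((Q.model q).unimodal c).core z)) : GateSpec (dihedral x q z) p := by
  obtain ⟨-, -, hz⟩ := hy
  have hbase := (Q.model p).exponent_base b
  have hexpt := ((Q.model p).unimodal b).exponent_zpow_of_eq_zero hbase
    (((Q.model q).unimodal c).exponent z)
  constructor <;> rw [gate_dihedral_of_pt_eq _ _ hpq hbc]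
  case isGate => exact isGate_attach_core hpq hbc hz hx
  all_goals rw [head_dihedral_of_pt_eq _ _ hpq hbc]
  case attach_head =>
    rw [attach_of_exponent_eq_zero p _ (b := b) (by rw [hexpt]; exact hz c)
        (DihedralModel.exponent_not_zpow_base _ b _),
      if_pos (IsUnimodal.core_zpow_of_exponent_eq_zero _ hbase _), hexpt, hbc,
      push_of_isCritical hx.isValid (hz c) hx.exponent_attach_core
        (isCritical_attach_core (hz _) hx),
      hx.gate_eq, hx.head_eq, IsUnimodal.zpow_exponent_core]
  case len_eq =>
    rw [len, hx.len_eq, IsUnimodal.len_zpow_of_exponent_eq_zero _ hbase, DihedralModel.len_base,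
      zero_add, ((Q.model q).unimodal c).len_eq z, add_assoc]
  case eval_eq =>
    rw [eval, hx.eval_eq, DihedralModel.eval_zpow, DihedralModel.eval_base, mul_one, hbc,
      ← mul_assoc, (Q.model q).eval_eq_zpow_mul_core c z]

theorem gateSpec_of_lt {y : NormalForm Q} (hy : y.IsValid) (p : Q.Line)
    (hgate : ∀ x : NormalForm Q, x.IsValid → x.len < y.len → GateSpec x p)
    (hattach : ∀ q x (z : (Q.model q).S), x.IsGate q → x.len + (Q.model q).len z < y.len →
      AttachSpec q x z) : GateSpec y p := by
  cases y with
  | one => exact gateSpec_of_trivial ⟨hy, fun _ => rfl⟩ rfl rfl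
  | cyclic x i t =>
    by_cases hi : ∃ b, Q.pt p b = i
    · obtain ⟨b, rfl⟩ := hi
      refine gateSpec_cyclic hy (hgate x hy.1 ?_)
      have := Int.natAbs_pos.mpr hy.2.1
      rw [len]
      omega
    · push Not at hi
      exact gateSpec_of_trivial ⟨hy, fun b => exponent_cyclic_of_ne _ _ (hi b).symm⟩
        (gate_cyclic_of_ne _ _ hi) (head_cyclic_of_ne _ _ hi)
  | dihedral x q z =>
    obtain rfl | ⟨hpq, b, c, hbc⟩ | ⟨hpq, hs⟩ := DihedralSystem.line_cases p q
    · exact gateSpec_dihedral hy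
    · refine gateSpec_dihedral_of_pt_eq hy hpq hbc (hattach q x _ ⟨hy.1, hy.2.1⟩ ?_)
      rw [len]
      exact Nat.add_lt_add_left (IsUnimodal.len_core_lt _ (hy.2.2 c)) _
    · exact gateSpec_of_trivial
        ⟨hy, fun b => exponent_dihedral_of_ne _ _ _ fun c => (hs b c).symm⟩
        (gate_dihedral_of_pt_ne _ _ hpq hs) (head_dihedral_of_pt_ne _ _ hpq hs)

theorem pushSpec_zero {y : NormalForm Q} (hy : y.IsValid) (i : ι) : PushSpec y i 0 := by
  constructor <;> simp [push_zero, hy]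

theorem pushSpec_of_not_isCritical {y : NormalForm Q} (hy : y.IsValid) {i : ι}
    (hi : y.exponent i = 0) {t : ℤ} (ht : t ≠ 0)
    (hc : ∀ p b, Q.pt p b = i → ¬y.IsCritical t p b) : PushSpec y i t := by
  constructor <;> rw [push_of_not_isCritical y ht hc]
  case isValid => exact ⟨hy, ht, hi, fun p b hp => not_not.mp (hc p b hp)⟩
  case len_eq => rfl
  case eval_eq => rfl
  case head_eq => rintro p b rfl; exact head_cyclic _ _ _ _
  case gate_eq => rintro p b rfl; exact gate_cyclic _ _ _ _

theorem head_gate_push_of_isCritical {y : NormalForm Q} (hy : y.IsValid) {p q : Q.Line}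
    {b c : Bool} {t : ℤ} (ht : t ≠ 0) (hexp : y.exponent (Q.pt p b) = 0)
    (hc : y.IsCritical t p b) (hp : GateSpec y p) (hpq : Q.pt q c = Q.pt p b) :
    (y.push (Q.pt p b) t).head q = ((Q.model q).act c ^ t) (y.head q) ∧
      (y.push (Q.pt p b) t).gate q = y.gate q := by
  have hexp' : ((Q.model p).unimodal b).exponent (y.head p) = 0 := by rw [exponent_head hy, hexp]
  rw [push_of_isCritical hy ht hexp hc]
  by_cases hqp : p = q
  · subst hqp
    obtain rfl := Q.pt_injective p hpq
    exact ⟨head_dihedral _ _ _, gate_dihedral _ _ _⟩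
  · obtain ⟨x, f, hx⟩ := exists_eq_cyclic_of_isCritical hy ht hexp hc
    have hnot : ∀ d, Q.pt q d ≠ Q.pt p (!b) := fun d hd => hqp (Q.line_eq hpq.symm hd.symm)
    rw [head_dihedral_of_pt_eq _ _ hqp hpq, gate_dihedral_of_pt_eq _ _ hqp hpq,
      IsUnimodal.core_zpow_of_exponent_eq_zero _ hexp', hp.attach_head,
      IsUnimodal.exponent_zpow_of_eq_zero _ hexp', hx, head_cyclic_of_ne _ _ hnot,
      gate_cyclic_of_ne _ _ hnot]
    exact ⟨rfl, rfl⟩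

theorem pushSpec_of_isCritical {y : NormalForm Q} (hy : y.IsValid) {p : Q.Line} {b : Bool}
    (hexp : y.exponent (Q.pt p b) = 0) {t : ℤ} (ht : t ≠ 0) (hc : y.IsCritical t p b)
    (hp : GateSpec y p) : PushSpec y (Q.pt p b) t := by
  have hexp' : ((Q.model p).unimodal b).exponent (y.head p) = 0 := by rw [exponent_head hy, hexp]
  have hlocal := fun {q c} => head_gate_push_of_isCritical (q := q) (c := c) hy ht hexp hc hp
  refine ⟨?_, ?_, ?_, fun q c hq => (hlocal hq).1, fun q c hq => (hlocal hq).2⟩ <;>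
    rw [push_of_isCritical hy ht hexp hc]
  · refine ⟨hp.isGate.isValid, hp.isGate.exponent_eq_zero, fun c => ?_⟩
    obtain rfl | rfl := Bool.eq_or_eq_not c b
    · rwa [IsUnimodal.exponent_zpow_of_eq_zero _ hexp']
    · exact hc
  · rw [len, IsUnimodal.len_zpow_of_exponent_eq_zero _ hexp', hp.len_eq, add_assoc]
  · rw [eval, DihedralModel.eval_zpow, hp.eval_eq, mul_assoc]

theorem pushSpec_of_gateSpec {y : NormalForm Q} (hy : y.IsValid) (hgate : ∀ p, GateSpec y p)
    {i : ι} (hi : y.exponent i = 0) (t : ℤ) : PushSpec y i t := by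
  obtain rfl | ht := eq_or_ne t 0
  · exact pushSpec_zero hy i
  by_cases hc : ∃ p b, Q.pt p b = i ∧ y.IsCritical t p b
  · obtain ⟨p, b, rfl, hc⟩ := hc
    exact pushSpec_of_isCritical hy hi ht hc (hgate p)
  · push Not at hc
    exact pushSpec_of_not_isCritical hy hi ht hc

theorem attachSpec_base {p : Q.Line} {x : NormalForm Q} (hx : x.IsGate p) (hp : GateSpec x p) :
    AttachSpec p x (Q.model p).base := by
  have hh := head_eq_base hx.isValid hx.exponent_eq_zero
  have hg := hp.attach_head
  rw [hh, attach_base] at hg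
  constructor <;> rw [attach_base]
  case isValid => exact hx.isValid
  case head_eq => exact hh
  case gate_eq => exact hg
  case len_eq => rw [DihedralModel.len_base, add_zero]
  case eval_eq => rw [DihedralModel.eval_base, one_mul]

theorem attachSpec_of_exponent_ne_zero {p : Q.Line} {x : NormalForm Q} (hx : x.IsGate p)
    {z : (Q.model p).S} (hz : ∀ b, ((Q.model p).unimodal b).exponent z ≠ 0) :
    AttachSpec p x z := by
  constructor <;> rw [attach_of_exponent_ne_zero _ _ hz]
  case isValid => exact ⟨hx.isValid, hx.exponent_eq_zero, hz⟩
  case head_eq => exact head_dihedral _ _ _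
  case gate_eq => exact gate_dihedral _ _ _
  case len_eq => rfl
  case eval_eq => rfl

theorem attachSpec_of_core {p : Q.Line} {x : NormalForm Q} {z : (Q.model p).S} {b : Bool}
    (hb : ((Q.model p).unimodal b).exponent z ≠ 0)
    (hb' : ((Q.model p).unimodal (!b)).exponent z = 0)
    (hcore : AttachSpec p x (((Q.model p).unimodal b).core z))
    (hpush : PushSpec (attach p x (((Q.model p).unimodal b).core z)) (Q.pt p b)
      (((Q.model p).unimodal b).exponent z)) : AttachSpec p x z := by
  constructor <;> rw [attach_eq_push hb hb' hcore.isValid hcore.head_eq]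
  case isValid => exact hpush.isValid
  case head_eq => rw [hpush.head_eq p b rfl, hcore.head_eq, IsUnimodal.zpow_exponent_core]
  case gate_eq => rw [hpush.gate_eq p b rfl, hcore.gate_eq]
  case len_eq => rw [hpush.len_eq, hcore.len_eq, ((Q.model p).unimodal b).len_eq z, add_assoc]
  case eval_eq =>
    rw [hpush.eval_eq, hcore.eval_eq, ← mul_assoc, (Q.model p).eval_eq_zpow_mul_core b z]

theorem attachSpec_of_lt {p : Q.Line} {x : NormalForm Q} (hx : x.IsGate p) (z : (Q.model p).S)
    (hgate : ∀ y : NormalForm Q, y.IsValid → y.len ≤ x.len + (Q.model p).len z →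
      ∀ q, GateSpec y q)
    (hattach : ∀ z', (Q.model p).len z' < (Q.model p).len z → AttachSpec p x z') :
    AttachSpec p x z := by
  by_cases hz : z = (Q.model p).base
  · subst hz
    exact attachSpec_base hx (hgate x hx.isValid (Nat.le_add_right _ _) p)
  by_cases hne : ∀ b, ((Q.model p).unimodal b).exponent z ≠ 0
  · exact attachSpec_of_exponent_ne_zero hx hne
  obtain ⟨b, hb, hb'⟩ : ∃ b, ((Q.model p).unimodal b).exponent z ≠ 0 ∧
      ((Q.model p).unimodal (!b)).exponent z = 0 := by
    by_contra! h
    push Not at hne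
    obtain ⟨c, hc⟩ := hne
    refine hz ((Q.model p).eq_base_of_exponent_eq_zero fun d => ?_)
    obtain rfl | rfl := Bool.eq_or_eq_not d c
    · exact hc
    · by_contra hd
      exact h (!c) hd (by rwa [Bool.not_not])
  have hlt := ((Q.model p).unimodal b).len_core_lt hb
  have hcore := hattach _ hlt
  refine attachSpec_of_core hb hb' hcore (pushSpec_of_gateSpec hcore.isValid
    (hgate _ hcore.isValid ?_) hcore.exponent_attach_core _)
  rw [hcore.len_eq]
  omega

theorem gateSpec_and_attachSpec (N : ℕ) :
    (∀ y : NormalForm Q, y.IsValid → y.len ≤ N → ∀ p, GateSpec y p) ∧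
    ∀ p x (z : (Q.model p).S), x.IsGate p → x.len + (Q.model p).len z ≤ N →
      AttachSpec p x z := by
  induction N using Nat.strong_induction_on with
  | _ N ih =>
    have hgate : ∀ y : NormalForm Q, y.IsValid → y.len ≤ N → ∀ p, GateSpec y p :=
      fun y hy hN p => gateSpec_of_lt hy p
        (fun x hx hlt => (ih _ (hlt.trans_le hN)).1 x hx le_rfl p)
        fun q x z hx hlt => (ih _ (hlt.trans_le hN)).2 q x z hx le_rfl
    refine ⟨hgate, fun p x z hx hN => attachSpec_of_lt hx z
      (fun y hy hle => hgate y hy (hle.trans hN)) fun z' hlt =>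
        (ih (x.len + (Q.model p).len z') (by omega)).2 p x z' hx le_rfl⟩

theorem gateSpec {y : NormalForm Q} (hy : y.IsValid) (p : Q.Line) : GateSpec y p :=
  (gateSpec_and_attachSpec y.len).1 y hy le_rfl p

theorem attachSpec {p : Q.Line} {x : NormalForm Q} (hx : x.IsGate p) (z : (Q.model p).S) :
    AttachSpec p x z :=
  (gateSpec_and_attachSpec _).2 p x z hx le_rfl

theorem pushSpec {y : NormalForm Q} (hy : y.IsValid) {i : ι} (hi : y.exponent i = 0) (t : ℤ) :
    PushSpec y i t :=
  pushSpec_of_gateSpec hy (gateSpec hy) hi t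

theorem ext_gate_head {x y : NormalForm Q} (hx : x.IsValid) (hy : y.IsValid) {p : Q.Line}
    (hg : x.gate p = y.gate p) (hh : x.head p = y.head p) : x = y := by
  rw [← (gateSpec hx p).attach_head, ← (gateSpec hy p).attach_head, hg, hh]

theorem push_injective {x y : NormalForm Q} (hx : x.IsValid) (hy : y.IsValid) {i : ι}
    (hxi : x.exponent i = 0) (hyi : y.exponent i = 0) {t : ℤ} (h : x.push i t = y.push i t) :
    x = y := by
  obtain ⟨p, b, rfl⟩ := Q.exists_pt i
  have hpx := pushSpec hx hxi t
  have hpy := pushSpec hy hyi t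
  refine ext_gate_head hx hy ?_ (((Q.model p).act b ^ t).injective ?_)
  · rw [← hpx.gate_eq p b rfl, h, hpy.gate_eq p b rfl]
  · rw [← hpx.head_eq p b rfl, h, hpy.head_eq p b rfl]

theorem attach_zpow {p : Q.Line} {x : NormalForm Q} (hx : x.IsGate p) (b : Bool) (t : ℤ)
    (z : (Q.model p).S) : attach p x (((Q.model p).act b ^ t) z) =
      (attach p x (((Q.model p).unimodal b).core z)).push (Q.pt p b)
        (t + ((Q.model p).unimodal b).exponent z) := by
  have hcore := attachSpec hx (((Q.model p).unimodal b).core z)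
  have hpush := pushSpec hcore.isValid hcore.exponent_attach_core
    (t + ((Q.model p).unimodal b).exponent z)
  have hz := attachSpec hx (((Q.model p).act b ^ t) z)
  refine ext_gate_head hz.isValid hpush.isValid (p := p) ?_ ?_
  · rw [hz.gate_eq, hpush.gate_eq p b rfl, hcore.gate_eq]
  · rw [hz.head_eq, hpush.head_eq p b rfl, hcore.head_eq, zpow_add, Equiv.Perm.mul_apply,
      IsUnimodal.zpow_exponent_core]

theorem attach_gate_zpow_head_eq {x : NormalForm Q} (hx : x.IsValid) {p q : Q.Line} {b c : Bool}
    (hbc : Q.pt p b = Q.pt q c) (t : ℤ) :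
    attach p (x.gate p) (((Q.model p).act b ^ t) (x.head p)) =
      attach q (x.gate q) (((Q.model q).act c ^ t) (x.head q)) := by
  have key (p : Q.Line) (b : Bool) : ∃ y : NormalForm Q, y.IsValid ∧ y.exponent (Q.pt p b) = 0 ∧
      ∀ t : ℤ, attach p (x.gate p) (((Q.model p).act b ^ t) (x.head p)) =
        y.push (Q.pt p b) (t + x.exponent (Q.pt p b)) := by
    have hgate := (gateSpec hx p).isGate
    have hcore := attachSpec hgate (((Q.model p).unimodal b).core (x.head p))
    refine ⟨_, hcore.isValid, hcore.exponent_attach_core, fun t => ?_⟩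
    rw [attach_zpow hgate, exponent_head hx]
  obtain ⟨y, hy, hyi, hxy⟩ := key p b
  obtain ⟨y', hy', hyi', hxy'⟩ := key q c
  rw [← hbc] at hyi' hxy'
  have h0 := hxy 0
  have h0' := hxy' 0
  rw [zpow_zero, Equiv.Perm.one_apply, (gateSpec hx _).attach_head] at h0 h0'
  rw [hxy, hxy', push_injective hy hy' hyi hyi' (h0.symm.trans h0')]

end NormalForm

/-! ### The action on valid normal forms -/

/-- The valid normal forms, which the group will be seen to permute simply transitively. -/
abbrev ValidForm {ι Γ : Type*} [Group Γ] (Q : DihedralSystem ι Γ) :=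
  {x : NormalForm Q // x.IsValid}

namespace ValidForm

open NormalForm

variable {ι Γ : Type*} [Group Γ] {Q : DihedralSystem ι Γ}

theorem attachSpec_gate (p : Q.Line) (x : ValidForm Q) (z : (Q.model p).S) :
    AttachSpec p (x.1.gate p) z :=
  attachSpec (gateSpec x.2 p).isGate z

/-- A permutation of the model of the line `p` acts on valid normal forms by changing the head
on `p` and keeping the gate. -/
noncomputable def headAct (p : Q.Line) : Equiv.Perm (Q.model p).S →* Equiv.Perm (ValidForm Q) :=
  MonoidHom.toHomPerm
    { toFun := fun f x => ⟨attach p (x.1.gate p) (f (x.1.head p)), (attachSpec_gate p x _).isValid⟩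
      map_one' := funext fun x => Subtype.ext (gateSpec x.2 p).attach_head
      map_mul' := fun f g => funext fun x => Subtype.ext <| by
        have hg := attachSpec_gate p x (g (x.1.head p))
        change _ = attach p ((attach p _ _).gate p) (f ((attach p _ _).head p))
        rw [hg.gate_eq, hg.head_eq, Equiv.Perm.mul_apply] }

variable (p : Q.Line) (f : Equiv.Perm (Q.model p).S) (x : ValidForm Q)

theorem len_headAct :
    (headAct p f x).1.len = (x.1.gate p).len + (Q.model p).len (f (x.1.head p)) :=
  (attachSpec_gate p x _).len_eq

theorem eval_headAct :
    (headAct p f x).1.eval = (Q.model p).eval (f (x.1.head p)) * (x.1.gate p).eval :=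
  (attachSpec_gate p x _).eval_eq

theorem headAct_eq {p q : Q.Line} {b c : Bool} (hbc : Q.pt p b = Q.pt q c) :
    headAct p ((Q.model p).act b) = headAct q ((Q.model q).act c) := by
  ext1 x
  have h := attach_gate_zpow_head_eq x.2 hbc 1
  rw [zpow_one, zpow_one] at h
  exact Subtype.ext h

/-- The permutation of the valid normal forms given by left multiplication by `γ i`. -/
noncomputable def genAct (i : ι) : Equiv.Perm (ValidForm Q) :=
  headAct (Q.exists_pt i).choose ((Q.model _).act (Q.exists_pt i).choose_spec.choose)

theorem genAct_pt (p : Q.Line) (b : Bool) : genAct (Q.pt p b) = headAct p ((Q.model p).act b) :=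
  headAct_eq (Q.exists_pt (Q.pt p b)).choose_spec.choose_spec

theorem eval_genAct (i : ι) : (genAct i x).1.eval = Q.γ i * x.1.eval := by
  obtain ⟨p, b, rfl⟩ := Q.exists_pt i
  rw [genAct_pt, eval_headAct, DihedralModel.eval_act, (gateSpec x.2 p).eval_eq, mul_assoc]

theorem isUnimodal_genAct (i : ι) :
    IsUnimodal (fun x : ValidForm Q => x.1.len) (genAct i) := by
  obtain ⟨p, b, rfl⟩ := Q.exists_pt i
  have hb := (Q.model p).unimodal b
  rw [genAct_pt]
  constructor <;> intro x
  case step =>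
    rw [len_headAct, (gateSpec x.2 p).len_eq]
    have := hb.step (x.1.head p)
    omega
  case no_peak =>
    rw [← map_inv, len_headAct, len_headAct, (gateSpec x.2 p).len_eq, add_lt_add_iff_left,
      add_lt_add_iff_left]
    exact hb.no_peak (x.1.head p)

theorem exists_head_ne_base {x : ValidForm Q} (hx : x.1 ≠ one) :
    ∃ p, x.1.head p ≠ (Q.model p).base := by
  have hexp : ∃ p b, x.1.exponent (Q.pt p b) ≠ 0 := by
    obtain ⟨x, hv⟩ := x
    cases x with
    | one => exact absurd rfl hx
    | cyclic y i t =>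
      obtain ⟨p, b, rfl⟩ := Q.exists_pt i
      exact ⟨p, b, by rw [exponent_cyclic_self]; exact hv.2.1⟩
    | dihedral y p z => exact ⟨p, true, by rw [exponent_dihedral]; exact hv.2.2 true⟩
  obtain ⟨p, b, hpb⟩ := hexp
  exact ⟨p, (Q.model p).ne_base_of_exponent_ne_zero (b := b) (by rwa [exponent_head x.2])⟩

theorem exists_len_genAct_lt {x : ValidForm Q} (hx : x.1 ≠ one) :
    ∃ i, (genAct i x).1.len < x.1.len ∨ ((genAct i)⁻¹ x).1.len < x.1.len := by
  obtain ⟨p, hp⟩ := exists_head_ne_base hx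
  obtain ⟨b, hb⟩ := (Q.model p).descent _ hp
  refine ⟨Q.pt p b, ?_⟩
  rwa [genAct_pt, ← map_inv, len_headAct, len_headAct, (gateSpec x.2 p).len_eq,
    add_lt_add_iff_left, add_lt_add_iff_left]

end ValidForm

/-! ### The model of a free group of rank two -/

section FreeModel

theorem mk_singleton_false {α : Type*} (i : α) :
    FreeGroup.mk [(i, false)] = (FreeGroup.of i)⁻¹ := by
  rw [FreeGroup.of, FreeGroup.inv_mk]
  rfl

variable {α : Type*} [DecidableEq α]

theorem toWord_mk_singleton_mul (a : α × Bool) (w : FreeGroup α) :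
    (FreeGroup.mk [a] * w).toWord =
      if w.toWord.head? = some (a.1, !a.2) then w.toWord.tail else a :: w.toWord := by
  rw [FreeGroup.toWord_mul, FreeGroup.toWord_mk, FreeGroup.reduce_singleton, List.singleton_append,
    FreeGroup.reduce.cons, FreeGroup.reduce_toWord]
  rcases w.toWord with _ | ⟨b, L⟩
  · rfl
  · have hiff : (a.1 = b.1 ∧ a.2 = !b.2) ↔ b = (a.1, !a.2) := by
      rw [Prod.ext_iff, eq_comm (a := a.1), Bool.eq_not, Bool.eq_not, ne_comm]
    simp only [List.head?_cons, Option.some_inj, List.tail_cons, hiff]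

theorem norm_mk_singleton_mul_of_ne {a : α × Bool} {w : FreeGroup α}
    (hw : w.toWord.head? ≠ some (a.1, !a.2)) : (FreeGroup.mk [a] * w).norm = w.norm + 1 := by
  rw [FreeGroup.norm, toWord_mk_singleton_mul, if_neg hw, List.length_cons, FreeGroup.norm]

theorem norm_mk_singleton_mul_of_eq {a : α × Bool} {w : FreeGroup α}
    (hw : w.toWord.head? = some (a.1, !a.2)) : w.norm = (FreeGroup.mk [a] * w).norm + 1 := by
  obtain ⟨L, hL⟩ := List.head?_eq_some_iff.mp hw
  rw [FreeGroup.norm, FreeGroup.norm, toWord_mk_singleton_mul, if_pos hw, hL, List.length_cons,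
    List.tail_cons]

theorem norm_mk_singleton_mul_lt_iff {a : α × Bool} {w : FreeGroup α} :
    (FreeGroup.mk [a] * w).norm < w.norm ↔ w.toWord.head? = some (a.1, !a.2) := by
  refine ⟨fun h => ?_, fun h => by rw [norm_mk_singleton_mul_of_eq h]; exact Nat.lt_succ_self _⟩
  by_contra hw
  rw [norm_mk_singleton_mul_of_ne hw] at h
  omega

theorem norm_lt_norm_mk_singleton_mul {a b : α × Bool} {w : FreeGroup α}
    (hw : w.toWord.head? = some b) (hab : a.1 ≠ b.1) : w.norm < (FreeGroup.mk [a] * w).norm := by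
  rw [norm_mk_singleton_mul_of_ne]
  · exact Nat.lt_succ_self _
  · rw [hw]
    rintro ⟨⟩
    exact hab rfl

theorem head?_toWord_mk_singleton_pow_mul {a : α × Bool} {w : FreeGroup α}
    (hw : w.toWord.head? ≠ some (a.1, !a.2)) (n : ℕ) :
    (FreeGroup.mk [a] ^ (n + 1) * w).toWord.head? = some a := by
  induction n with
  | zero => rw [zero_add, pow_one, toWord_mk_singleton_mul, if_neg hw, List.head?_cons]
  | succ n ih =>
    have hne : (a.1, !a.2) ≠ a := fun h => Bool.not_ne_self a.2 (congrArg Prod.snd h)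
    rw [pow_succ', mul_assoc, toWord_mk_singleton_mul, ih, if_neg (by simpa using hne.symm),
      List.head?_cons]

theorem exists_head?_toWord_of_zpow_mul {i : α} {t : ℤ} (ht : t ≠ 0) {w : FreeGroup α}
    (hw : ∀ s, w.toWord.head? ≠ some (i, s)) :
    ∃ s, (FreeGroup.of i ^ t * w).toWord.head? = some (i, s) := by
  obtain ⟨n, rfl | rfl⟩ := t.eq_nat_or_neg <;>
    obtain ⟨n, rfl⟩ := Nat.exists_eq_succ_of_ne_zero (n := n) (by omega)
  · rw [zpow_natCast]
    exact ⟨true, head?_toWord_mk_singleton_pow_mul (hw _) n⟩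
  · rw [zpow_neg, ← inv_zpow, zpow_natCast, ← mk_singleton_false]
    exact ⟨false, head?_toWord_mk_singleton_pow_mul (hw _) n⟩

theorem isUnimodal_norm_mulLeft_of (i : α) :
    IsUnimodal FreeGroup.norm (Equiv.mulLeft (FreeGroup.of i)) where
  step w := by
    by_cases hw : w.toWord.head? = some (i, false)
    · exact .inr (norm_mk_singleton_mul_of_eq (a := (i, true)) hw)
    · exact .inl (norm_mk_singleton_mul_of_ne (a := (i, true)) hw)
  no_peak w h := by
    rw [Equiv.Perm.inv_def, Equiv.mulLeft_symm_apply, ← mk_singleton_false] at h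
    have hpos := norm_mk_singleton_mul_lt_iff.mp h.1
    simp [norm_mk_singleton_mul_lt_iff.mp h.2] at hpos

theorem exists_norm_of_mul_lt {w : FreeGroup α} (hw : w ≠ 1) :
    ∃ i, (FreeGroup.of i * w).norm < w.norm ∨ ((FreeGroup.of i)⁻¹ * w).norm < w.norm := by
  obtain ⟨⟨i, s⟩, L, hL⟩ := List.exists_cons_of_ne_nil (mt FreeGroup.toWord_eq_nil_iff.mp hw)
  have hlt : (FreeGroup.mk [(i, !s)] * w).norm < w.norm :=
    norm_mk_singleton_mul_lt_iff.mpr (by simp [hL])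
  refine ⟨i, ?_⟩
  cases s
  · exact .inl hlt
  · rw [← mk_singleton_false]
    exact .inr hlt

theorem exists_head?_toWord_of_zpow_mul_of_zpow {i j : α} (hij : i ≠ j) {t : ℤ} (ht : t ≠ 0)
    (f : ℤ) : ∃ s, (FreeGroup.of i ^ t * FreeGroup.of j ^ f).toWord.head? = some (i, s) := by
  refine exists_head?_toWord_of_zpow_mul ht fun s h => ?_
  obtain rfl | hf := eq_or_ne f 0
  · simp at h
  · obtain ⟨s', hs'⟩ := exists_head?_toWord_of_zpow_mul (i := j) (w := 1) hf (by simp)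
    rw [mul_one, h] at hs'
    exact hij (congrArg Prod.fst (Option.some_inj.mp hs'))

/-- The free group on `Bool`, acting on itself, as a model of any two elements of a group. -/
def freeModel {Γ : Type*} [Group Γ] (u : Bool → Γ) : DihedralModel u where
  S := FreeGroup Bool
  base := 1
  act b := Equiv.mulLeft (FreeGroup.of b)
  len := FreeGroup.norm
  eval := FreeGroup.lift u
  len_base := FreeGroup.norm_one
  eval_base := map_one _
  eval_act b z := by rw [Equiv.coe_mulLeft, map_mul, FreeGroup.lift_apply_of]
  unimodal := isUnimodal_norm_mulLeft_of
  descent _ hz := exists_norm_of_mul_lt hz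
  ascent b t f z ht hz := by
    simp only [Equiv.zpow_mulLeft, Equiv.coe_mulLeft, mul_one] at hz
    obtain ⟨s, hs⟩ := exists_head?_toWord_of_zpow_mul_of_zpow (Bool.not_ne_self b).symm ht f
    rw [← hz] at hs
    rw [Equiv.Perm.inv_def, Equiv.mulLeft_symm_apply, ← mk_singleton_false]
    exact ⟨norm_lt_norm_mk_singleton_mul (a := (!b, true)) hs (Bool.not_ne_self b),
      norm_lt_norm_mk_singleton_mul (a := (!b, false)) hs (Bool.not_ne_self b)⟩

end FreeModel

/-! ### Garside normal forms of dihedral Artin groups -/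

/-- The alternating product of `j` factors `u b` that starts with `u c`. -/
def altWord {G : Type*} [Monoid G] (u : Bool → G) (j : ℕ) (c : Bool) : G :=
  altProd j (u c) (u !c)

/-- The last letter of an alternating word of length `j` that starts with `c`; for `j = 0` it is
`!c`, so that `!lastLetter j c` always is the letter that continues the word. -/
def lastLetter : ℕ → Bool → Bool
  | 0, c => !c
  | j + 1, c => lastLetter j !c

theorem lastLetter_not (j : ℕ) (c : Bool) : lastLetter j (!c) = !lastLetter j c := by
  induction j generalizing c with
  | zero => rfl
  | succ _ ih => exact ih !c

theorem lastLetter_comm (i j : ℕ) (c : Bool) :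
    lastLetter i (lastLetter j c) = lastLetter j (lastLetter i c) := by
  induction i generalizing c with
  | zero => exact (lastLetter_not j c).symm
  | succ i ih =>
    rw [lastLetter, lastLetter, ← lastLetter_not, ih]

theorem lastLetter_lastLetter (j : ℕ) (c : Bool) : lastLetter j (lastLetter j c) = c := by
  induction j generalizing c with
  | zero => exact Bool.not_not c
  | succ j ih =>
    rw [lastLetter, lastLetter, lastLetter_not, lastLetter_not, lastLetter_not, Bool.not_not, ih]

section AltWord

variable {G : Type*} [Monoid G] (u : Bool → G)

theorem altWord_succ (j : ℕ) (c : Bool) : altWord u (j + 1) c = u c * altWord u j !c := by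
  simp only [altWord, altProd, Bool.not_not]

theorem altWord_add (i j : ℕ) (c : Bool) :
    altWord u (i + j) c = altWord u i c * altWord u j !lastLetter i c := by
  induction i generalizing c with
  | zero => simp only [zero_add, lastLetter, Bool.not_not, altWord, altProd, one_mul]
  | succ i ih => rw [add_right_comm, altWord_succ, ih, altWord_succ, lastLetter, mul_assoc]

theorem altWord_succ_last (j : ℕ) (c : Bool) :
    altWord u (j + 1) c = altWord u j c * u !lastLetter j c := by
  rw [altWord_add, altWord_succ u 0]
  exact congrArg _ (mul_one _)

variable {u}

theorem semiconjBy_altWord {m : ℕ} (hu : ∀ c, altWord u m c = altWord u m true) (j : ℕ) (c : Bool) :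
    SemiconjBy (altWord u m true) (altWord u j (lastLetter m !c)) (altWord u j c) := by
  have hgen (c : Bool) : SemiconjBy (altWord u m true) (u (lastLetter m !c)) (u c) := by
    have hlast := altWord_succ_last u m c
    rw [altWord_succ, hu, hu c, ← lastLetter_not] at hlast
    exact hlast.symm
  induction j generalizing c with
  | zero => exact SemiconjBy.one_right _
  | succ j ih =>
    rw [altWord_succ, altWord_succ]
    have := ih !c
    rw [lastLetter_not] at this
    exact (hgen c).mul_right this

end AltWord

/-- The Garside normal form `a₁ a₂ ⋯ a_r Δ^k` of an element of the dihedral Artin group of type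
`m`. Each `aᵢ` is an alternating word, of a length in `[1, m - 1]`, whose first letter is the last
letter of `aᵢ₋₁`. The form records these lengths, the first letter of `a₁` and `k`. -/
structure GarsideForm where
  factors : List ℕ
  first : Bool
  power : ℤ

namespace GarsideForm

/-- The first letter `b`, replaced by the default `true` if there are no factors. -/
def normFirst : List ℕ → Bool → Bool
  | [], _ => true
  | _ :: _, b => b

/-- The condition that a form is a normal form of type `m`. -/
structure IsValid (m : ℕ) (s : GarsideForm) : Prop where
  factors_mem : ∀ p ∈ s.factors, 1 ≤ p ∧ p < m
  first_eq : normFirst s.factors s.first = s.first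

/-- The normal form obtained by multiplying with the generator `c` on the left. -/
def genMul (m : ℕ) (c : Bool) : GarsideForm → GarsideForm
  | ⟨[], _, k⟩ => ⟨[1], c, k⟩
  | ⟨p :: ps, b, k⟩ =>
    if b = c then ⟨1 :: p :: ps, c, k⟩
    else if p + 1 < m then ⟨(p + 1) :: ps, c, k⟩
    else ⟨ps, normFirst ps !c, k + 1⟩

/-- The normal form obtained by multiplying with the inverse of the generator `c` on the left. -/
def invGenMul (m : ℕ) (c : Bool) : GarsideForm → GarsideForm
  | ⟨[], _, k⟩ => ⟨[m - 1], !c, k - 1⟩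
  | ⟨p :: ps, b, k⟩ =>
    if b = c then if p = 1 then ⟨ps, normFirst ps c, k⟩ else ⟨(p - 1) :: ps, !c, k⟩
    else ⟨(m - 1) :: p :: ps, !c, k - 1⟩

/-- The length of the first factor if the generator `c` prolongs it on the left, else `0`. -/
def threshold (c : Bool) : GarsideForm → ℤ
  | ⟨[], _, _⟩ => 0
  | ⟨p :: _, b, _⟩ => if b = c then 0 else p

/-- The `threshold` for `c` after multiplication with the inverse of `c`. -/
def invThreshold (m : ℕ) (c : Bool) : GarsideForm → ℤ
  | ⟨[], _, _⟩ => m - 1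
  | ⟨p :: _, b, _⟩ => if b = c then p - 1 else m - 1

/-- A lower bound for the word length, for each `q` in `[0, m]`. It is exact if `k = -k'` and `k'`
is the number of factors longer than `q`: each of these absorbs one `Δ⁻¹` and turns from a positive
word of length `p` into a negative word of length `m - p`. -/
def weight (m : ℕ) (q : ℤ) (s : GarsideForm) : ℤ :=
  (s.factors.map fun p : ℕ => min (p : ℤ) (2 * q - p)).sum + (2 * q - m) * s.power

theorem normFirst_normFirst (ps : List ℕ) (b : Bool) :
    normFirst ps (normFirst ps b) = normFirst ps b := by
  cases ps <;> rfl

theorem isValid_nil {m : ℕ} {b : Bool} {k : ℤ} : IsValid m ⟨[], b, k⟩ ↔ true = b :=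
  ⟨fun h => h.first_eq, fun h => ⟨by simp, h⟩⟩

theorem isValid_cons {m p : ℕ} {ps : List ℕ} {b : Bool} {k : ℤ} :
    IsValid m ⟨p :: ps, b, k⟩ ↔ (1 ≤ p ∧ p < m) ∧ ∀ x ∈ ps, 1 ≤ x ∧ x < m :=
  ⟨fun h => List.forall_mem_cons.mp h.factors_mem, fun h => ⟨List.forall_mem_cons.mpr h, rfl⟩⟩

theorem isValid_normFirst {m : ℕ} {ps : List ℕ} {b : Bool} {k : ℤ}
    (hps : ∀ p ∈ ps, 1 ≤ p ∧ p < m) : IsValid m ⟨ps, normFirst ps b, k⟩ :=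
  ⟨hps, normFirst_normFirst ps b⟩

section Thresholds

variable {m : ℕ} (c : Bool) {s : GarsideForm}

theorem threshold_nonneg : 0 ≤ threshold c s := by
  obtain ⟨_ | ⟨p, ps⟩, b, k⟩ := s
  · rfl
  · rw [threshold]
    split_ifs <;> omega

theorem threshold_not_genMul_le : threshold (!c) (genMul m c s) ≤ threshold c s + 1 := by
  obtain ⟨_ | ⟨p, ps⟩, b, k⟩ := s
  · simp [genMul, threshold]
  · rw [genMul, threshold]
    split_ifs with hb hpm
    · simp [threshold]
    · simp [threshold]
    · cases ps <;> simp only [threshold, normFirst, ↓reduceIte] <;> omega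

theorem invThreshold_not_genMul (h : threshold c s < m - 1) :
    invThreshold m (!c) (genMul m c s) = m - 1 := by
  obtain ⟨_ | ⟨p, ps⟩, b, k⟩ := s
  · simp [genMul, invThreshold]
  · rw [threshold] at h
    rw [genMul]
    split_ifs with hb hpm
    · simp [invThreshold]
    · simp [invThreshold]
    · rw [if_neg hb] at h
      omega

theorem threshold_not_invGenMul (h : 0 < invThreshold m c s) :
    threshold (!c) (invGenMul m c s) = 0 := by
  obtain ⟨_ | ⟨p, ps⟩, b, k⟩ := s
  · simp [invGenMul, threshold]
  · rw [invThreshold] at h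
    rw [invGenMul]
    split_ifs with hb hp1
    · rw [if_pos hb] at h
      omega
    · simp [threshold]
    · simp [threshold]

variable (hm : 2 ≤ m) (hs : IsValid m s)
include hs

theorem weight_genMul {q : ℤ} (h0 : 0 ≤ q) (hq : q ≤ m) :
    weight m q (genMul m c s) = weight m q s + if threshold c s < q then 1 else -1 := by
  obtain ⟨_ | ⟨p, ps⟩, b, k⟩ := s
  · simp only [weight, genMul, threshold, List.map_cons, List.map_nil, List.sum_cons, List.sum_nil,
      Nat.cast_one]
    split_ifs <;> omega
  · obtain ⟨hp, -⟩ := isValid_cons.mp hs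
    rw [genMul, threshold]
    split_ifs with hb hpm <;>
      simp only [weight, List.map_cons, List.sum_cons, mul_add, Nat.cast_add, Nat.cast_one] <;>
      omega

include hm

theorem isValid_genMul : IsValid m (genMul m c s) := by
  obtain ⟨_ | ⟨p, ps⟩, b, k⟩ := s
  · exact isValid_cons.mpr ⟨⟨le_rfl, hm⟩, by simp⟩
  · obtain ⟨hp, hps⟩ := isValid_cons.mp hs
    rw [genMul]
    split_ifs with hb hpm
    · exact isValid_cons.mpr ⟨⟨le_rfl, hm⟩, List.forall_mem_cons.mpr ⟨hp, hps⟩⟩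
    · exact isValid_cons.mpr ⟨⟨by omega, hpm⟩, hps⟩
    · exact isValid_normFirst hps

theorem isValid_invGenMul : IsValid m (invGenMul m c s) := by
  obtain ⟨_ | ⟨p, ps⟩, b, k⟩ := s
  · exact isValid_cons.mpr ⟨by omega, by simp⟩
  · obtain ⟨hp, hps⟩ := isValid_cons.mp hs
    rw [invGenMul]
    split_ifs with hb hp1
    · exact isValid_normFirst hps
    · exact isValid_cons.mpr ⟨by omega, hps⟩
    · exact isValid_cons.mpr ⟨by omega, List.forall_mem_cons.mpr ⟨hp, hps⟩⟩

theorem genMul_invGenMul : genMul m c (invGenMul m c s) = s := by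
  obtain ⟨_ | ⟨p, ps⟩, b, k⟩ := s
  · obtain rfl := isValid_nil.mp hs
    simp [invGenMul, genMul, normFirst, show ¬m - 1 + 1 < m by omega]
  · obtain ⟨hp, -⟩ := isValid_cons.mp hs
    obtain rfl | rfl := Bool.eq_or_eq_not b c
    · obtain rfl | hp1 := eq_or_ne p 1
      · cases ps <;> simp [invGenMul, genMul, normFirst]
      · simp [invGenMul, genMul, hp1, Nat.sub_add_cancel hp.1, hp.2]
    · simp [invGenMul, genMul, normFirst, show ¬m - 1 + 1 < m by omega]

theorem invGenMul_genMul : invGenMul m c (genMul m c s) = s := by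
  obtain ⟨_ | ⟨p, ps⟩, b, k⟩ := s
  · obtain rfl := isValid_nil.mp hs
    simp [invGenMul, genMul, normFirst]
  · obtain ⟨hp, -⟩ := isValid_cons.mp hs
    obtain rfl | rfl := Bool.eq_or_eq_not b c
    · simp [invGenMul, genMul, normFirst]
    · by_cases hpm : p + 1 < m
      · simp [invGenMul, genMul, hpm, Nat.ne_of_gt hp.1]
      · cases ps <;> simp [invGenMul, genMul, normFirst, hpm, show m - 1 = p by omega]

theorem threshold_invGenMul : threshold c (invGenMul m c s) = invThreshold m c s := by
  obtain ⟨_ | ⟨p, ps⟩, b, k⟩ := s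
  · simp only [threshold, invGenMul, Bool.not_eq_eq_eq_not, Bool.eq_not_self, ↓reduceIte,
      invThreshold]
    omega
  · obtain ⟨hp, -⟩ := isValid_cons.mp hs
    rw [invGenMul, invThreshold]
    split_ifs with hb hp1
    · cases ps <;> simp [threshold, normFirst, hp1]
    · simp [threshold, Nat.cast_sub hp.1]
    · simp only [threshold, Bool.not_eq_eq_eq_not, Bool.eq_not_self, ↓reduceIte]
      omega

theorem threshold_le_invThreshold : threshold c s ≤ invThreshold m c s := by
  obtain ⟨_ | ⟨p, ps⟩, b, k⟩ := s
  · rw [threshold, invThreshold]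
    omega
  · obtain ⟨hp, -⟩ := isValid_cons.mp hs
    rw [threshold, invThreshold]
    split_ifs <;> omega

theorem le_invThreshold_not_invGenMul :
    invThreshold m c s - 1 ≤ invThreshold m (!c) (invGenMul m c s) := by
  obtain ⟨_ | ⟨p, ps⟩, b, k⟩ := s
  · simp only [invThreshold, invGenMul, ↓reduceIte]
    omega
  · obtain ⟨hp, -⟩ := isValid_cons.mp hs
    rw [invGenMul, invThreshold]
    split_ifs with hb hp1
    · cases ps <;> simp only [invThreshold, normFirst, Bool.eq_not_self, ↓reduceIte] <;> omega
    · simp only [invThreshold, ↓reduceIte]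
      omega
    · simp only [invThreshold, ↓reduceIte]
      omega

end Thresholds

section Weight

variable {m : ℕ} (q : ℤ)

theorem weight_nil (b : Bool) (k : ℤ) : weight m q ⟨[], b, k⟩ = (2 * q - m) * k := by
  simp [weight]

theorem weight_cons (p : ℕ) (ps : List ℕ) (b : Bool) (k : ℤ) :
    weight m q ⟨p :: ps, b, k⟩ = min (p : ℤ) (2 * q - p) + weight m q ⟨ps, b, k⟩ := by
  simp [weight, add_assoc]

theorem even_weight_sub_weight (q' : ℤ) (s : GarsideForm) :
    Even (weight m q s - weight m q' s) := by
  obtain ⟨ps, b, k⟩ := s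
  induction ps with
  | nil =>
    rw [weight_nil, weight_nil]
    exact ⟨(q - q') * k, by ring⟩
  | cons p ps ih =>
    rw [weight_cons, weight_cons, add_sub_add_comm]
    refine Even.add ?_ ih
    rw [Int.even_iff]
    omega

theorem weight_zero_add_weight {s : GarsideForm} (hs : IsValid m s) :
    weight m 0 s + weight m m s = 0 := by
  obtain ⟨ps, b, k⟩ := s
  have hps := hs.factors_mem
  clear hs
  induction ps with
  | nil =>
    rw [weight_nil, weight_nil]
    ring
  | cons p ps ih =>
    obtain ⟨hp, hps⟩ := List.forall_mem_cons.mp hps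
    have := ih hps
    rw [weight_cons, weight_cons]
    omega

/-- `P` is one of `p < ·` and `p ≤ ·`, for the right and the left derivative of the concave function
`weight m · s` at `p`. -/
theorem weight_le_tangent (p : ℤ) (P : ℕ → Prop) [DecidablePred P] (hlt : ∀ x : ℕ, p < x → P x)
    (hle : ∀ x : ℕ, P x → p ≤ x) (s : GarsideForm) :
    weight m q s ≤ weight m p s + 2 * ((q - p) * (s.factors.countP P + s.power)) := by
  obtain ⟨ps, b, k⟩ := s
  induction ps with
  | nil =>
    rw [weight_nil, weight_nil, List.countP_nil, Nat.cast_zero]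
    exact le_of_eq (by ring)
  | cons x ps ih =>
    have hmin : min (x : ℤ) (2 * q - x) ≤
        min (x : ℤ) (2 * p - x) + 2 * ((q - p) * if P x then 1 else 0) := by
      have hx := hlt x
      have hx' := hle x
      split_ifs with hP
      · simp only [hP, true_implies] at hx'
        omega
      · simp only [hP, imp_false] at hx
        omega
    rw [weight_cons, weight_cons, List.countP_cons]
    simp only [decide_eq_true_eq] at ih ⊢
    push_cast
    linarith

end Weight

/-- The type of valid normal forms of type `m`. -/
abbrev Valid (m : ℕ) := {s : GarsideForm // s.IsValid m}

namespace Valid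

variable {m : ℕ}

/-- The word length of the element represented by a normal form. -/
noncomputable def len (s : Valid m) : ℕ :=
  (Finset.Icc (0 : ℤ) m).sup fun q => (s.1.weight m q).toNat

theorem weight_le_len (s : Valid m) {q : ℤ} (h0 : 0 ≤ q) (hq : q ≤ m) :
    s.1.weight m q ≤ s.len :=
  (Int.self_le_toNat _).trans <| Nat.cast_le.mpr <|
    Finset.le_sup (f := fun q => (s.1.weight m q).toNat) (Finset.mem_Icc.mpr ⟨h0, hq⟩)

theorem exists_weight_eq_len (s : Valid m) : ∃ q : ℤ, 0 ≤ q ∧ q ≤ m ∧ s.1.weight m q = s.len := by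
  have hzero := s.weight_le_len le_rfl (Int.natCast_nonneg m)
  have hm := s.weight_le_len (Int.natCast_nonneg m) le_rfl
  have hsum := weight_zero_add_weight s.2
  obtain ⟨q, hq, hlen⟩ := Finset.exists_mem_eq_sup (Finset.Icc (0 : ℤ) m)
    ⟨0, Finset.mem_Icc.mpr ⟨le_rfl, Int.natCast_nonneg m⟩⟩ fun q => (s.1.weight m q).toNat
  change s.len = _ at hlen
  rw [Finset.mem_Icc] at hq
  by_cases hpos : 0 ≤ s.1.weight m q
  · exact ⟨q, hq.1, hq.2, by omega⟩
  · exact ⟨0, le_rfl, by omega, by omega⟩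

/-- The form of the identity. -/
def base : Valid m := ⟨⟨[], true, 0⟩, isValid_nil.mpr rfl⟩

theorem weight_base (q : ℤ) : (base : Valid m).1.weight m q = 0 := by
  rw [base, weight_nil, mul_zero]

theorem len_base : (base : Valid m).len = 0 := by
  obtain ⟨q, -, -, hq⟩ := exists_weight_eq_len (base : Valid m)
  rw [weight_base] at hq
  exact_mod_cast hq.symm

/-- Left multiplication by the generator `c`. -/
def act (hm : 2 ≤ m) (c : Bool) : Equiv.Perm (Valid m) where
  toFun s := ⟨genMul m c s.1, isValid_genMul c hm s.2⟩
  invFun s := ⟨invGenMul m c s.1, isValid_invGenMul c hm s.2⟩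
  left_inv s := Subtype.ext (invGenMul_genMul c hm s.2)
  right_inv s := Subtype.ext (genMul_invGenMul c hm s.2)

variable (hm : 2 ≤ m) (c : Bool) (s : Valid m)

theorem coe_act : (act hm c s).1 = genMul m c s.1 := rfl

theorem threshold_act_inv : ((act hm c)⁻¹ s).1.threshold c = s.1.invThreshold m c :=
  threshold_invGenMul c hm s.2

theorem invThreshold_act : (act hm c s).1.invThreshold m c = s.1.threshold c := by
  rw [← threshold_act_inv hm, Equiv.Perm.inv_def, Equiv.symm_apply_apply]

theorem weight_act {q : ℤ} (h0 : 0 ≤ q) (hq : q ≤ m) :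
    (act hm c s).1.weight m q = s.1.weight m q + if s.1.threshold c < q then 1 else -1 :=
  weight_genMul c s.2 h0 hq

theorem weight_act_inv {q : ℤ} (h0 : 0 ≤ q) (hq : q ≤ m) :
    ((act hm c)⁻¹ s).1.weight m q =
      s.1.weight m q + if q ≤ s.1.invThreshold m c then 1 else -1 := by
  have h := weight_act hm c ((act hm c)⁻¹ s) h0 hq
  rw [threshold_act_inv, Equiv.Perm.inv_def, Equiv.apply_symm_apply, ← Equiv.Perm.inv_def] at h
  split_ifs at h ⊢ <;> omega

theorem len_lt_len_act_iff : s.len < (act hm c s).len ↔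
    ∃ q : ℤ, 0 ≤ q ∧ q ≤ m ∧ s.1.weight m q = s.len ∧ s.1.threshold c < q := by
  constructor
  · intro hlt
    obtain ⟨q, h0, hq, heq⟩ := exists_weight_eq_len (act hm c s)
    have hle := s.weight_le_len h0 hq
    rw [weight_act hm c s h0 hq] at heq
    split_ifs at heq with hthr
    · exact ⟨q, h0, hq, by omega, hthr⟩
    · omega
  · rintro ⟨q, h0, hq, heq, hthr⟩
    have hle := (act hm c s).weight_le_len h0 hq
    rw [weight_act hm c s h0 hq, if_pos hthr] at hle
    omega

theorem len_lt_len_act_inv_iff : s.len < ((act hm c)⁻¹ s).len ↔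
    ∃ q : ℤ, 0 ≤ q ∧ q ≤ m ∧ s.1.weight m q = s.len ∧ q ≤ s.1.invThreshold m c := by
  constructor
  · intro hlt
    obtain ⟨q, h0, hq, heq⟩ := exists_weight_eq_len ((act hm c)⁻¹ s)
    have hle := s.weight_le_len h0 hq
    rw [weight_act_inv hm c s h0 hq] at heq
    split_ifs at heq with hthr
    · exact ⟨q, h0, hq, by omega, hthr⟩
    · omega
  · rintro ⟨q, h0, hq, heq, hthr⟩
    have hle := ((act hm c)⁻¹ s).weight_le_len h0 hq
    rw [weight_act_inv hm c s h0 hq, if_pos hthr] at hle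
    omega

theorem isUnimodal_act : IsUnimodal len (act hm c) where
  step s := by
    obtain ⟨q, h0, hq, heq⟩ := exists_weight_eq_len s
    obtain ⟨q', h0', hq', heq'⟩ := exists_weight_eq_len (act hm c s)
    have hle := (act hm c s).weight_le_len h0 hq
    have hle' := s.weight_le_len h0' hq'
    rw [weight_act hm c s h0 hq] at hle
    rw [weight_act hm c s h0' hq'] at heq'
    obtain ⟨d, hd⟩ := even_weight_sub_weight (m := m) q q' s.1
    split_ifs at hle heq' <;> omega
  no_peak s := by
    rintro ⟨hlt, hlt'⟩
    obtain ⟨q, h0, hq, heq⟩ := exists_weight_eq_len s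
    have hthr := mt (len_lt_len_act_iff hm c s).mpr hlt.asymm
    have hthr' := mt (len_lt_len_act_inv_iff hm c s).mpr hlt'.asymm
    have hle := threshold_le_invThreshold c hm s.2
    obtain hq' | hq' := lt_or_ge (s.1.threshold c) q
    · exact hthr ⟨q, h0, hq, heq, hq'⟩
    · exact hthr' ⟨q, h0, hq, heq, hq'.trans hle⟩

section Descent

variable {hm s} (hmin : ∀ c, s.len < (act hm c s).len ∧ s.len < ((act hm c)⁻¹ s).len)
include hmin

theorem factors_eq_nil_of_minimal : s.1.factors = [] := by
  obtain ⟨⟨_ | ⟨p, ps⟩, b, k⟩, hs⟩ := s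
  · rfl
  exfalso
  obtain ⟨hp, -⟩ := isValid_cons.mp hs
  obtain ⟨q, -, -, heq, hlt⟩ := (len_lt_len_act_iff hm (!b) _).mp (hmin !b).1
  obtain ⟨q', -, -, heq', hlt'⟩ := (len_lt_len_act_inv_iff hm b _).mp (hmin b).2
  have hle := weight_le_len ⟨⟨p :: ps, b, k⟩, hs⟩ (q := p) (by omega) (by omega)
  rw [threshold, if_neg (Bool.not_ne_self b).symm] at hlt
  rw [invThreshold, if_pos rfl] at hlt'
  have hright := weight_le_tangent (m := m) q p (p < ·) (by simp) (fun _ h => by omega)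
    ⟨p :: ps, b, k⟩
  have hleft := weight_le_tangent (m := m) q' p (p ≤ ·) (fun _ h => by omega) (by simp)
    ⟨p :: ps, b, k⟩
  rw [List.countP_cons_of_neg (by simp)] at hright
  rw [List.countP_cons_of_pos (by simp), Nat.cast_succ] at hleft
  have hcount : ps.countP (p < ·) ≤ ps.countP (p ≤ ·) :=
    List.countP_mono_left fun x _ hx => decide_eq_true (of_decide_eq_true hx).le
  have hslope : 0 ≤ (ps.countP (p < ·) : ℤ) + k := by
    by_contra! h
    nlinarith
  have hslope' : (ps.countP (p ≤ ·) : ℤ) + 1 + k ≤ 0 := by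
    by_contra! h
    nlinarith
  omega

theorem eq_base_of_minimal : s = base := by
  have hnil := factors_eq_nil_of_minimal hmin
  obtain ⟨⟨ps, b, k⟩, hs⟩ := s
  obtain rfl : ps = [] := hnil
  obtain rfl := isValid_nil.mp hs
  obtain ⟨q, -, -, heq, hlt⟩ := (len_lt_len_act_iff hm true _).mp (hmin true).1
  obtain ⟨q', -, -, heq', hlt'⟩ := (len_lt_len_act_inv_iff hm true _).mp (hmin true).2
  have hle := weight_le_len ⟨⟨[], true, k⟩, hs⟩ le_rfl (Int.natCast_nonneg m)
  have hle' := weight_le_len ⟨⟨[], true, k⟩, hs⟩ (Int.natCast_nonneg m) le_rfl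
  rw [← heq, weight_nil, weight_nil] at hle
  rw [← heq', weight_nil, weight_nil] at hle'
  rw [threshold] at hlt
  rw [invThreshold] at hlt'
  have hk : 0 ≤ k := by
    by_contra! h
    nlinarith
  have hk' : k ≤ 0 := by
    by_contra! h
    nlinarith
  obtain rfl : k = 0 := le_antisymm hk' hk
  rfl

end Descent

theorem exists_len_act_lt {s : Valid m} (hs : s ≠ base) :
    ∃ c, (act hm c s).len < s.len ∨ ((act hm c)⁻¹ s).len < s.len := by
  by_contra! hcon
  exact hs <| eq_base_of_minimal (hm := hm) fun c =>
    ⟨(isUnimodal_act hm c).lt_of_le (hcon c).1, (isUnimodal_act hm c).inv.lt_of_le (hcon c).2⟩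

section Ascent

theorem threshold_act_pow_le (n : ℕ) :
    ((act hm c ^ n) s).1.threshold c ≤ s.1.threshold c := by
  induction n with
  | zero => rfl
  | succ n ih =>
    rw [pow_succ', Equiv.Perm.mul_apply]
    exact (threshold_le_invThreshold c hm (act hm c _).2).trans
      ((invThreshold_act hm c _).trans_le ih)

theorem invThreshold_le_act_inv_pow (n : ℕ) :
    s.1.invThreshold m c ≤ (((act hm c)⁻¹ ^ n) s).1.invThreshold m c := by
  induction n with
  | zero => rfl
  | succ n ih =>
    rw [pow_succ', Equiv.Perm.mul_apply]
    exact (ih.trans_eq (threshold_act_inv hm c _).symm).trans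
      (threshold_le_invThreshold c hm ((act hm c)⁻¹ _).2)

theorem weight_act_pow {q : ℤ} (h0 : 0 ≤ q) (hq : q ≤ m) (hthr : s.1.threshold c < q) (n : ℕ) :
    ((act hm c ^ n) s).1.weight m q = s.1.weight m q + n := by
  induction n with
  | zero => exact (add_zero _).symm
  | succ n ih =>
    rw [pow_succ', Equiv.Perm.mul_apply, weight_act hm c _ h0 hq, ih,
      if_pos ((threshold_act_pow_le hm c s n).trans_lt hthr), Nat.cast_succ, add_assoc]

theorem weight_act_inv_pow {q : ℤ} (h0 : 0 ≤ q) (hq : q ≤ m) (hthr : q ≤ s.1.invThreshold m c)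
    (n : ℕ) : (((act hm c)⁻¹ ^ n) s).1.weight m q = s.1.weight m q + n := by
  induction n with
  | zero => exact (add_zero _).symm
  | succ n ih =>
    rw [pow_succ', Equiv.Perm.mul_apply, weight_act_inv hm c _ h0 hq, ih,
      if_pos (hthr.trans (invThreshold_le_act_inv_pow hm c s n)), Nat.cast_succ, add_assoc]

/-- The first alternative is the case `0 < t`, the second one the case `t < 0`. -/
theorem act_zpow_thresholds {t : ℤ} (ht : t ≠ 0) (hthr : s.1.threshold c < m - 1)
    (hthr' : 0 < s.1.invThreshold m c) {z : Valid m} (hz : z = (act hm c ^ t) s) :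
    (z.1.threshold (!c) ≤ s.1.threshold c + 1 ∧ z.1.invThreshold m (!c) = m - 1 ∧
      ∀ q : ℤ, s.1.threshold c < q → q ≤ m → z.1.weight m q = s.1.weight m q + t.natAbs) ∨
    (z.1.threshold (!c) = 0 ∧ s.1.invThreshold m c - 1 ≤ z.1.invThreshold m (!c) ∧
      ∀ q : ℤ, 0 ≤ q → q ≤ m → q ≤ s.1.invThreshold m c →
        z.1.weight m q = s.1.weight m q + t.natAbs) := by
  obtain ⟨n, rfl | rfl⟩ := t.eq_nat_or_neg <;>
    obtain ⟨n, rfl⟩ := Nat.exists_eq_succ_of_ne_zero (n := n) (by omega)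
  · rw [zpow_natCast] at hz
    have hle := threshold_act_pow_le hm c s n
    refine .inl ⟨?_, ?_, fun q hq hqm => ?_⟩
    · rw [hz, pow_succ', Equiv.Perm.mul_apply]
      exact (threshold_not_genMul_le c).trans (by omega)
    · rw [hz, pow_succ', Equiv.Perm.mul_apply]
      exact invThreshold_not_genMul c (hle.trans_lt hthr)
    · rw [hz, Int.natAbs_natCast]
      exact weight_act_pow hm c s ((threshold_nonneg c).trans hq.le) hqm hq _
  · rw [zpow_neg, ← inv_zpow, zpow_natCast] at hz
    have hle := invThreshold_le_act_inv_pow hm c s n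
    refine .inr ⟨?_, ?_, fun q h0 hqm hq => ?_⟩
    · rw [hz, pow_succ', Equiv.Perm.mul_apply]
      exact threshold_not_invGenMul c (hthr'.trans_le hle)
    · rw [hz, pow_succ', Equiv.Perm.mul_apply]
      refine le_trans ?_ (le_invThreshold_not_invGenMul c hm (Subtype.prop _))
      omega
    · rw [hz, Int.natAbs_neg, Int.natAbs_natCast]
      exact weight_act_inv_pow hm c s h0 hqm hq _

theorem act_zpow_base_thresholds (f : ℤ) {z : Valid m} (hz : z = (act hm c ^ f) base) :
    (z.1.threshold (!c) ≤ 1 ∧ z.1.invThreshold m (!c) = m - 1 ∧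
      ∀ q : ℤ, 0 < q → q ≤ m → z.1.weight m q = f.natAbs) ∨
    (z.1.threshold (!c) = 0 ∧ m - 2 ≤ z.1.invThreshold m (!c) ∧
      ∀ q : ℤ, 0 ≤ q → q ≤ m - 1 → z.1.weight m q = f.natAbs) := by
  have hthr : (base : Valid m).1.threshold c = 0 := rfl
  have hthr' : (base : Valid m).1.invThreshold m c = m - 1 := rfl
  obtain rfl | hf := eq_or_ne f 0
  · obtain rfl : z = base := hz
    exact .inl ⟨zero_le_one, rfl, fun q _ _ => weight_base q⟩
  · have h := act_zpow_thresholds hm c base hf (by omega) (by omega) hz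
    simp only [weight_base, hthr, hthr', zero_add] at h
    refine h.imp_right fun h => ⟨h.1, by omega, fun q h0 hq => h.2.2 q h0 (by omega) hq⟩

theorem len_lt_act_of_weight {N : ℕ} (hlen : s.len ≤ N) {p q : ℤ} (hp : 0 ≤ p) (hpq : p ≤ q)
    (hq : q ≤ m) (hthr : s.1.threshold c < q) (hthr' : p ≤ s.1.invThreshold m c)
    (hweight : ∀ x, p ≤ x → x ≤ q → s.1.weight m x = N) :
    s.len < (act hm c s).len ∧ s.len < ((act hm c)⁻¹ s).len := by
  have hlen' : s.len = N := by
    have hle := s.weight_le_len (hp.trans hpq) hq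
    rw [hweight q hpq le_rfl] at hle
    exact le_antisymm hlen (by exact_mod_cast hle)
  rw [len_lt_len_act_iff, len_lt_len_act_inv_iff, hlen']
  exact ⟨⟨q, hp.trans hpq, hq, hweight q hpq le_rfl, hthr⟩,
    ⟨p, hp, hpq.trans hq, hweight p le_rfl hpq, hthr'⟩⟩

theorem len_lt_act_zpow_zpow_base (h3 : 3 ≤ m) {t : ℤ} (ht : t ≠ 0) (f : ℤ) {z : Valid m}
    (hz : z = (act hm c ^ t) ((act hm (!c) ^ f) base)) :
    z.len < (act hm (!c) z).len ∧ z.len < ((act hm (!c))⁻¹ z).len := by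
  have hlen : z.len ≤ f.natAbs + t.natAbs := by
    have hle := (isUnimodal_act hm (!c)).len_zpow_le f base
    rw [len_base, zero_add] at hle
    exact hz ▸ ((isUnimodal_act hm c).len_zpow_le t _).trans (Nat.add_le_add_right hle _)
  generalize hy : (act hm (!c) ^ f) base = y at hz
  have hbase := act_zpow_base_thresholds hm (!c) f hy.symm
  rw [Bool.not_not] at hbase
  have hzpow := act_zpow_thresholds hm c y ht (by omega) (by omega) hz
  rcases hbase with ⟨hy1, hy2, hyw⟩ | ⟨hy1, hy2, hyw⟩ <;>
    rcases hzpow with ⟨hz1, hz2, hzw⟩ | ⟨hz1, hz2, hzw⟩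
  · exact len_lt_act_of_weight hm (!c) z hlen (p := 2) (q := m) (by omega) (by omega) (by omega)
      (by omega) (by omega) fun x _ _ => by
        rw [hzw x (by omega) (by omega), hyw x (by omega) (by omega), Nat.cast_add]
  · exact len_lt_act_of_weight hm (!c) z hlen (p := 1) (q := m - 1) (by omega) (by omega) (by omega)
      (by omega) (by omega) fun x _ _ => by
        rw [hzw x (by omega) (by omega) (by omega), hyw x (by omega) (by omega), Nat.cast_add]
  · exact len_lt_act_of_weight hm (!c) z hlen (p := 1) (q := m - 1) (by omega) (by omega) (by omega)
      (by omega) (by omega) fun x _ _ => by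
        rw [hzw x (by omega) (by omega), hyw x (by omega) (by omega), Nat.cast_add]
  · exact len_lt_act_of_weight hm (!c) z hlen (p := 0) (q := m - 2) (by omega) (by omega) (by omega)
      (by omega) (by omega) fun x _ _ => by
        rw [hzw x (by omega) (by omega) (by omega), hyw x (by omega) (by omega), Nat.cast_add]

end Ascent

section Braid

theorem coe_altWord_act {j : ℕ} (hj : j + 1 < m) (ps : List ℕ) (k : ℤ)
    (hs : s.1 = ⟨ps, normFirst ps (lastLetter (j + 1) c), k⟩) :
    (altWord (act hm) (j + 1) c s).1 = ⟨(j + 1) :: ps, c, k⟩ := by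
  induction j generalizing c with
  | zero =>
    have hone : altWord (act hm) 0 (!c) = 1 := rfl
    rw [altWord_succ, hone, mul_one, coe_act, hs, lastLetter, lastLetter, Bool.not_not]
    cases ps <;> simp [genMul, normFirst]
  | succ j ih =>
    rw [altWord_succ, Equiv.Perm.mul_apply, coe_act, ih (!c) (by omega) hs, genMul,
      if_neg (Bool.not_ne_self c), if_pos hj]

theorem coe_altWord_act_full (ps : List ℕ) (k : ℤ)
    (hs : s.1 = ⟨ps, normFirst ps (lastLetter m c), k⟩) :
    (altWord (act hm) m c s).1 = ⟨ps, normFirst ps !c, k + 1⟩ := by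
  obtain ⟨j, rfl⟩ := Nat.exists_eq_add_of_le' hm
  rw [altWord_succ, Equiv.Perm.mul_apply, coe_act,
    coe_altWord_act hm (!c) s (by omega) ps k hs, genMul, if_neg (Bool.not_ne_self c),
    if_neg (by omega)]

theorem coe_altWord_act_garside : (altWord (act hm) m c s).1 =
    ⟨s.1.factors, normFirst s.1.factors (lastLetter m !s.1.first), s.1.power + 1⟩ := by
  obtain ⟨⟨_ | ⟨p, ps⟩, b, k⟩, hs⟩ := s
  · obtain rfl := isValid_nil.mp hs
    exact coe_altWord_act_full hm c _ [] k rfl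
  obtain ⟨⟨hp, hpm⟩, hps⟩ := isValid_cons.mp hs
  obtain ⟨p, rfl⟩ := Nat.exists_eq_add_of_le' hp
  obtain rfl | hb := Bool.eq_or_eq_not b (lastLetter m c)
  · rw [coe_altWord_act_full hm c _ ((p + 1) :: ps) k rfl, lastLetter_not, lastLetter_lastLetter]
  let s₀ : Valid m := ⟨⟨ps, normFirst ps (lastLetter (p + 1) b), k⟩, isValid_normFirst hps⟩
  have hs₀ : (⟨⟨(p + 1) :: ps, b, k⟩, hs⟩ : Valid m) = altWord (act hm) (p + 1) b s₀ :=
    Subtype.ext (coe_altWord_act hm b s₀ hpm ps k rfl).symm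
  have hfull := coe_altWord_act_full hm (!lastLetter (p + 1) c) s₀ ps k <| by
    rw [← lastLetter_not, lastLetter_comm, lastLetter_not m, ← hb]
  rw [Bool.not_not] at hfull
  calc (altWord (act hm) m c ⟨⟨(p + 1) :: ps, b, k⟩, hs⟩).1
    _ = (altWord (act hm) (p + 1) c (altWord (act hm) m (!lastLetter (p + 1) c) s₀)).1 := by
      rw [hs₀, hb, ← Equiv.Perm.mul_apply, ← altWord_add, add_comm, altWord_add,
        Equiv.Perm.mul_apply]
    _ = ⟨(p + 1) :: ps, c, k + 1⟩ := coe_altWord_act hm c _ hpm ps (k + 1) hfull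
    _ = _ := by simp only [normFirst, hb, Bool.not_not, lastLetter_lastLetter]

theorem altWord_act_eq : altWord (act hm) m c = altWord (act hm) m true :=
  Equiv.ext fun s => Subtype.ext <| by
    rw [coe_altWord_act_garside, coe_altWord_act_garside]

end Braid

end Valid

section Eval

variable {Γ : Type*} [Group Γ] (u : Bool → Γ) {m : ℕ}

/-- The product of the factors of a normal form that starts with the letter `b`. -/
def evalFactors : List ℕ → Bool → Γ
  | [], _ => 1
  | p :: ps, b => altWord u p b * evalFactors ps (lastLetter p b)

/-- The element of `Γ` represented by a normal form, with `u` as the generators. -/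
def eval (m : ℕ) : GarsideForm → Γ
  | ⟨ps, b, k⟩ => evalFactors u ps b * altWord u m true ^ k

theorem evalFactors_normFirst (ps : List ℕ) (b : Bool) :
    evalFactors u ps (normFirst ps b) = evalFactors u ps b := by
  cases ps <;> rfl

variable {u} (hu : ∀ c, altWord u m c = altWord u m true)
include hu

theorem semiconjBy_evalFactors (ps : List ℕ) (c : Bool) :
    SemiconjBy (altWord u m true) (evalFactors u ps (lastLetter m !c)) (evalFactors u ps c) := by
  induction ps generalizing c with
  | nil => exact SemiconjBy.one_right _
  | cons p ps ih =>
    have h := ih (lastLetter p c)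
    rw [← lastLetter_not, lastLetter_comm] at h
    exact (semiconjBy_altWord hu p c).mul_right h

theorem eval_genMul (c : Bool) {s : GarsideForm} (hs : IsValid m s) :
    eval u m (genMul m c s) = u c * eval u m s := by
  have hone : altWord u 1 c = u c := mul_one _
  obtain ⟨_ | ⟨p, ps⟩, b, k⟩ := s
  · rw [genMul, eval, eval, evalFactors, evalFactors, evalFactors, hone, mul_one, one_mul]
  obtain rfl | rfl := Bool.eq_or_eq_not b c
  · rw [genMul, if_pos rfl, eval, evalFactors, hone, lastLetter, lastLetter, Bool.not_not, eval,
      mul_assoc]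
  rw [genMul, if_neg (Bool.not_ne_self c)]
  split_ifs with hpm
  · rw [eval, evalFactors, altWord_succ, lastLetter, eval, evalFactors, mul_assoc, mul_assoc,
      mul_assoc]
  · obtain rfl : m = p + 1 := by
      have := (isValid_cons.mp hs).1.2
      omega
    have hsemi := semiconjBy_evalFactors hu ps !c
    rw [Bool.not_not] at hsemi
    rw [eval, evalFactors_normFirst, add_comm k, zpow_one_add, ← mul_assoc, ← hsemi.eq, lastLetter,
      eval, evalFactors, mul_assoc (altWord u p !c), ← mul_assoc (u c),
      ← altWord_succ, hu c, mul_assoc]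

end Eval

/-- The Garside normal forms of type `m`, as a model of any two elements of a group that satisfy the
braid relation of length `m`. -/
noncomputable def model {m : ℕ} (hm : 3 ≤ m) {Γ : Type*} [Group Γ] {u : Bool → Γ}
    (hu : ∀ c, altWord u m c = altWord u m true) : DihedralModel u where
  S := Valid m
  base := Valid.base
  act := Valid.act (by omega)
  len := Valid.len
  eval s := eval u m s.1
  len_base := Valid.len_base
  eval_base := by rw [Valid.base, eval, evalFactors, zpow_zero, mul_one]
  eval_act c s := eval_genMul hu c s.2
  unimodal := Valid.isUnimodal_act _
  descent _ hs := Valid.exists_len_act_lt _ hs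
  ascent c _ f _ ht hz := Valid.len_lt_act_zpow_zpow_base _ c hm ht f hz

end GarsideForm

/-! ### Word length -/

section WordLength

variable {G : Type*} [Group G] {S : Set G} (hS : ∀ s ∈ S, s⁻¹ ∈ S)
include hS

theorem wordLength_eq_of_descent {ℓ : G → ℕ} (hone : ℓ 1 = 0)
    (hle : ∀ s ∈ S, ∀ g, ℓ (s * g) ≤ ℓ g + 1) (hlt : ∀ g, g ≠ 1 → ∃ s ∈ S, ℓ (s * g) < ℓ g) :
    wordLength S = ℓ := by
  have hlower : ∀ w : List G, (∀ a ∈ w, a ∈ S) → ℓ w.prod ≤ w.length := by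
    intro w hw
    induction w with
    | nil => exact hone.le
    | cons a w ih =>
      rw [List.prod_cons, List.length_cons]
      have ha := hle a (hw a List.mem_cons_self) w.prod
      have hw' := ih fun b hb => hw b (List.mem_cons_of_mem a hb)
      omega
  have hupper : ∀ N g, ℓ g = N → ∃ w : List G, (∀ a ∈ w, a ∈ S) ∧ w.length = N ∧ w.prod = g := by
    intro N
    induction N with
    | zero =>
      intro g hg
      obtain rfl : g = 1 := by
        by_contra hg1
        obtain ⟨s, -, hs⟩ := hlt g hg1
        omega
      exact ⟨[], by simp⟩
    | succ N ih =>
      intro g hg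
      obtain ⟨s, hs, hsg⟩ := hlt g (by rintro rfl; omega)
      have hback := hle s⁻¹ (hS s hs) (s * g)
      rw [inv_mul_cancel_left] at hback
      obtain ⟨w, hw, hwN, hwg⟩ := ih (s * g) (by omega)
      exact ⟨s⁻¹ :: w, List.forall_mem_cons.mpr ⟨hS s hs, hw⟩, by rw [List.length_cons, hwN],
        by rw [List.prod_cons, hwg, inv_mul_cancel_left]⟩
  ext g
  have hg := hupper _ g rfl
  refine le_antisymm (Nat.sInf_le hg) (le_csInf ⟨_, hg⟩ ?_)
  rintro N ⟨w, hw, rfl, rfl⟩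
  exact hlower w hw

theorem wordLength_inv (g : G) : wordLength S g⁻¹ = wordLength S g := by
  have hinv : ∀ (N : ℕ) (g : G), (∃ w : List G, (∀ a ∈ w, a ∈ S) ∧ w.length = N ∧ w.prod = g) →
      ∃ w : List G, (∀ a ∈ w, a ∈ S) ∧ w.length = N ∧ w.prod = g⁻¹ := by
    rintro N g ⟨w, hw, hN, rfl⟩
    refine ⟨(w.map (·⁻¹)).reverse, fun a ha => ?_, by simpa using hN,
      (List.prod_inv_reverse w).symm⟩
    obtain ⟨b, hb, rfl⟩ := List.mem_map.mp (List.mem_reverse.mp ha)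
    exact hS b (hw b hb)
  refine congrArg sInf (Set.ext fun N => ⟨fun h => ?_, hinv N g⟩)
  rw [← inv_inv g]
  exact hinv N g⁻¹ h

end WordLength

/-! ### Artin groups of large type -/

theorem map_altProd {G H F : Type*} [Monoid G] [Monoid H] [FunLike F G H] [MonoidHomClass F G H]
    (f : F) (m : ℕ) (x y : G) : f (altProd m x y) = altProd m (f x) (f y) := by
  induction m generalizing x y with
  | zero => exact map_one f
  | succ m ih => rw [altProd, altProd, map_mul, ih]

theorem exists_dihedralModel {Γ : Type*} [Group Γ] (u : Bool → Γ) (μ : ℕ∞) (hμ : 3 ≤ μ)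
    (hu : ∀ m : ℕ, μ = m → altProd m (u false) (u true) = altProd m (u true) (u false)) :
    ∃ D : DihedralModel u, ∀ m : ℕ, μ = m →
      altProd m (D.act false) (D.act true) = altProd m (D.act true) (D.act false) := by
  induction μ using ENat.recTopCoe with
  | top => exact ⟨freeModel u, fun m hm => absurd hm.symm (ENat.natCast_ne_top m)⟩
  | coe m =>
    have hm : 3 ≤ m := by exact_mod_cast hμ
    refine ⟨GarsideForm.model hm (u := u) (Bool.forall_bool.mpr ⟨hu m rfl, rfl⟩), fun k hk => ?_⟩
    obtain rfl : m = k := by exact_mod_cast hk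
    exact GarsideForm.Valid.altWord_act_eq (by omega) false

section Artin

variable {n : ℕ} {M : Fin n → Fin n → ℕ∞}

theorem altProd_gen {i j : Fin n} (hij : i ≠ j) {m : ℕ} (hm : M i j = m) :
    altProd m (gen n M i) (gen n M j) = altProd m (gen n M j) (gen n M i) := by
  have h := PresentedGroup.one_of_mem (rels := artinRels n M) ⟨i, j, hij, m, hm, rfl⟩
  rw [map_mul, map_inv, mul_inv_eq_one, map_altProd, map_altProd] at h
  exact h

/-- The two members of a pair `i < j`, in this order. -/
def pairPoint (p : {q : Fin n × Fin n // q.1 < q.2}) (b : Bool) : Fin n :=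
  if b then p.1.2 else p.1.1

theorem pairPoint_injective (p : {q : Fin n × Fin n // q.1 < q.2}) :
    Function.Injective (pairPoint p) := by
  rintro (_ | _) (_ | _) h
  · rfl
  · exact absurd h p.2.ne
  · exact absurd h p.2.ne'
  · rfl

theorem eq_of_pairPoint_eq {p q : {q : Fin n × Fin n // q.1 < q.2}} {b c c' : Bool}
    (h : pairPoint p b = pairPoint q c) (h' : pairPoint p (!b) = pairPoint q c') : p = q := by
  obtain ⟨⟨i, j⟩, hij⟩ := p
  obtain ⟨⟨k, l⟩, hkl⟩ := q
  rw [Subtype.mk.injEq, Prod.mk.injEq]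
  cases b <;> cases c <;> cases c' <;>
    simp only [pairPoint, Bool.not_true, Bool.not_false, if_true, Bool.false_eq_true, if_false]
      at h h' hij hkl <;> omega

theorem exists_pairPoint_eq (hn : 2 ≤ n) (i : Fin n) :
    ∃ (p : {q : Fin n × Fin n // q.1 < q.2}) (b : Bool), pairPoint p b = i := by
  have := Fin.nontrivial_iff_two_le.mpr hn
  obtain ⟨j, hj⟩ := exists_ne i
  obtain hij | hij := lt_or_gt_of_ne hj
  · exact ⟨⟨(j, i), hij⟩, true, rfl⟩
  · exact ⟨⟨(i, j), hij⟩, false, rfl⟩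

variable (hn : 2 ≤ n) (hlarge : ∀ i j, i ≠ j → 3 ≤ M i j)
include hlarge

theorem exists_pairModel (p : {q : Fin n × Fin n // q.1 < q.2}) :
    ∃ D : DihedralModel fun b => gen n M (pairPoint p b), ∀ m : ℕ, M p.1.1 p.1.2 = m →
      altProd m (D.act false) (D.act true) = altProd m (D.act true) (D.act false) :=
  exists_dihedralModel _ _ (hlarge _ _ p.2.ne) fun _ hm => altProd_gen p.2.ne hm

include hn in
/-- The system of dihedral models of an Artin group of large type: the points are the generators
and every pair of generators is a line. -/
noncomputable def artinSystem : DihedralSystem (Fin n) (ArtinGroup n M) where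
  γ := gen n M
  Line := {q : Fin n × Fin n // q.1 < q.2}
  pt := pairPoint
  model p := (exists_pairModel hlarge p).choose
  pt_injective := pairPoint_injective
  line_eq := eq_of_pairPoint_eq
  exists_pt := exists_pairPoint_eq hn

open ValidForm

theorem altProd_genAct_of_lt {i j : Fin n} (hij : i < j) {m : ℕ} (hm : M i j = m) :
    altProd m (genAct (Q := artinSystem hn hlarge) i) (genAct j) =
      altProd m (genAct j) (genAct i) := by
  let p : (artinSystem hn hlarge).Line := ⟨(i, j), hij⟩
  have hi : genAct (Q := artinSystem hn hlarge) i = _ := genAct_pt p false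
  have hj : genAct (Q := artinSystem hn hlarge) j = _ := genAct_pt p true
  rw [hi, hj, ← map_altProd, ← map_altProd]
  exact congrArg _ ((exists_pairModel hlarge p).choose_spec m hm)

variable (hsymm : ∀ i j, M i j = M j i)
include hsymm

theorem altProd_genAct {i j : Fin n} (hij : i ≠ j) {m : ℕ} (hm : M i j = m) :
    altProd m (genAct (Q := artinSystem hn hlarge) i) (genAct j) =
      altProd m (genAct j) (genAct i) := by
  obtain hlt | hlt := lt_or_gt_of_ne hij
  · exact altProd_genAct_of_lt hn hlarge hlt hm
  · exact (altProd_genAct_of_lt hn hlarge hlt ((hsymm j i).trans hm)).symm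

/-- The action of an Artin group of large type on its normal forms by left multiplication. -/
noncomputable def artinAct : ArtinGroup n M →* Equiv.Perm (ValidForm (artinSystem hn hlarge)) :=
  PresentedGroup.toGroup (f := genAct) <| by
    rintro _ ⟨i, j, hij, m, hm, rfl⟩
    rw [map_mul, map_inv, mul_inv_eq_one, map_altProd, map_altProd, FreeGroup.lift_apply_of,
      FreeGroup.lift_apply_of]
    exact altProd_genAct hn hlarge hsymm hij hm

theorem artinAct_gen (i : Fin n) : artinAct hn hlarge hsymm (gen n M i) = genAct i :=
  PresentedGroup.toGroup.of _

/-- The normal form of an element of an Artin group of large type. -/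
noncomputable def artinForm (g : ArtinGroup n M) : ValidForm (artinSystem hn hlarge) :=
  artinAct hn hlarge hsymm g ⟨NormalForm.one, trivial⟩

theorem artinForm_mul (g h : ArtinGroup n M) :
    artinForm hn hlarge hsymm (g * h) =
      artinAct hn hlarge hsymm g (artinForm hn hlarge hsymm h) := by
  rw [artinForm, map_mul, Equiv.Perm.mul_apply, artinForm]

theorem eval_artinAct (g : ArtinGroup n M) (x : ValidForm (artinSystem hn hlarge)) :
    (artinAct hn hlarge hsymm g x).1.eval = g * x.1.eval := by
  have hg : g ∈ Subgroup.closure (Set.range PresentedGroup.of) := by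
    rw [PresentedGroup.closure_range_of]
    exact Subgroup.mem_top g
  induction hg using Subgroup.closure_induction generalizing x with
  | mem _ h =>
    obtain ⟨i, rfl⟩ := h
    rw [← gen, artinAct_gen]
    exact eval_genAct x i
  | one => rw [map_one, Equiv.Perm.one_apply, one_mul]
  | mul g h _ _ hg hh => rw [map_mul, Equiv.Perm.mul_apply, hg, hh, mul_assoc]
  | inv g _ hg =>
    rw [eq_inv_mul_iff_mul_eq, ← hg, ← Equiv.Perm.mul_apply, ← map_mul, mul_inv_cancel, map_one,
      Equiv.Perm.one_apply]

theorem eval_artinForm (g : ArtinGroup n M) : (artinForm hn hlarge hsymm g).1.eval = g :=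
  (eval_artinAct hn hlarge hsymm g _).trans (mul_one g)

theorem isUnimodal_len_artinForm (i : Fin n) :
    IsUnimodal (fun g => (artinForm hn hlarge hsymm g).1.len) (Equiv.mulLeft (gen n M i)) :=
  (isUnimodal_genAct i).of_semiconj (π := artinForm hn hlarge hsymm) fun g =>
    (artinForm_mul hn hlarge hsymm (gen n M i) g).trans (by rw [artinAct_gen])

theorem exists_len_artinForm_lt {g : ArtinGroup n M} (hg : g ≠ 1) : ∃ s ∈ genSet n M,
    (artinForm hn hlarge hsymm (s * g)).1.len < (artinForm hn hlarge hsymm g).1.len := by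
  have hne : (artinForm hn hlarge hsymm g).1 ≠ NormalForm.one := fun h => hg <| by
    rw [← eval_artinForm hn hlarge hsymm g, h, NormalForm.eval]
  obtain ⟨i, hi | hi⟩ := exists_len_genAct_lt hne
  · exact ⟨_, ⟨i, .inl rfl⟩, by rwa [artinForm_mul, artinAct_gen]⟩
  · exact ⟨_, ⟨i, .inr rfl⟩, by rwa [artinForm_mul, map_inv, artinAct_gen]⟩

omit hlarge hsymm in
theorem inv_mem_genSet : ∀ s ∈ genSet n M, s⁻¹ ∈ genSet n M := by
  rintro _ ⟨i, rfl | rfl⟩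
  · exact ⟨i, .inr rfl⟩
  · exact ⟨i, .inl (inv_inv _)⟩

theorem wordLength_genSet_eq_len_artinForm :
    wordLength (genSet n M) = fun g => (artinForm hn hlarge hsymm g).1.len := by
  refine wordLength_eq_of_descent inv_mem_genSet ?_ ?_
    fun g hg => exists_len_artinForm_lt hn hlarge hsymm hg
  · rw [artinForm, map_one, Equiv.Perm.one_apply, NormalForm.len]
  · rintro _ ⟨i, rfl | rfl⟩ g <;> have hi := isUnimodal_len_artinForm hn hlarge hsymm i
    · exact hi.len_zpow_le 1 g
    · have h := hi.inv.len_zpow_le 1 g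
      rwa [zpow_one, Equiv.inv_mulLeft] at h

include hn in
theorem isUnimodal_wordLength_mulRight_gen (i : Fin n) :
    IsUnimodal (wordLength (genSet n M)) (Equiv.mulRight (gen n M i)) := by
  have hleft : IsUnimodal (wordLength (genSet n M)) (Equiv.mulLeft (gen n M i))⁻¹ := by
    rw [wordLength_genSet_eq_len_artinForm hn hlarge hsymm]
    exact (isUnimodal_len_artinForm hn hlarge hsymm i).inv
  have hinv : wordLength (genSet n M) ∘ Inv.inv = wordLength (genSet n M) :=
    funext (wordLength_inv inv_mem_genSet)
  rw [← hinv]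
  refine hleft.of_semiconj fun g => ?_
  rw [Equiv.inv_mulLeft]
  exact mul_inv_rev g (gen n M i)

include hn in
theorem isUnimodal_wordLength_mulRight_toGen (a : Letter n) :
    IsUnimodal (wordLength (genSet n M)) (Equiv.mulRight (toGen n M a)) := by
  have h := isUnimodal_wordLength_mulRight_gen hn hlarge hsymm a.1
  rw [toGen]
  split_ifs
  · exact h
  · simpa only [Equiv.inv_mulRight] using h.inv

include hn in
theorem wordLength_mul_toGen_eq_or (g : ArtinGroup n M) (a : Letter n) :
    wordLength (genSet n M) (g * toGen n M a) = wordLength (genSet n M) g + 1 ∨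
      wordLength (genSet n M) g = wordLength (genSet n M) (g * toGen n M a) + 1 :=
  (isUnimodal_wordLength_mulRight_toGen hn hlarge hsymm a).step g

include hn in
theorem wordLength_mul_toGen_pow {g : ArtinGroup n M} {a : Letter n}
    (h : wordLength (genSet n M) g < wordLength (genSet n M) (g * toGen n M a)) (k : ℕ) :
    wordLength (genSet n M) (g * toGen n M a ^ k) = wordLength (genSet n M) g + k := by
  have hpow := (isUnimodal_wordLength_mulRight_toGen hn hlarge hsymm a).len_pow h k
  rwa [Equiv.pow_mulRight] at hpow

end Artin

theorem wordLength_wordElt_le {n : ℕ} {M : Fin n → Fin n → ℕ∞} (w : List (Letter n)) :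
    wordLength (genSet n M) (wordElt n M w) ≤ w.length := by
  refine Nat.sInf_le ⟨w.map (toGen n M), fun g hg => ?_, List.length_map _, rfl⟩
  obtain ⟨a, -, rfl⟩ := List.mem_map.mp hg
  rw [toGen]
  split_ifs
  · exact ⟨a.1, .inl rfl⟩
  · exact ⟨a.1, .inr rfl⟩

theorem wordElt_append_replicate {n : ℕ} {M : Fin n → Fin n → ℕ∞} (w : List (Letter n))
    (a : Letter n) (k : ℕ) :
    wordElt n M (w ++ List.replicate k a) = wordElt n M w * toGen n M a ^ k := by
  rw [wordElt, List.map_append, List.prod_append, List.map_replicate, List.prod_replicate, wordElt]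

/-- **Corollary.** In an Artin group of large type, if `wa` is geodesic then so is
`w a^k` for every `k ≥ 1`. -/
theorem geodesic_append_replicate
    (n : ℕ) (hn : 2 ≤ n) (M : Fin n → Fin n → ℕ∞)
    (hsymm : ∀ i j, M i j = M j i)
    (hdiag : ∀ i, M i i = 1)
    (hlarge : ∀ i j, i ≠ j → 3 ≤ M i j)
    (w : List (Letter n)) (a : Letter n)
    (hgeod : IsGeodesic n M (w ++ [a]))
    (k : ℕ) (hk : 1 ≤ k) :
    IsGeodesic n M (w ++ List.replicate k a) := by
  have hwa : wordLength (genSet n M) (wordElt n M w * toGen n M a) = w.length + 1 := by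
    have h := wordElt_append_replicate (M := M) w a 1
    rw [pow_one, List.replicate_one] at h
    rw [← h, hgeod, List.length_append, List.length_singleton]
  have hw : wordLength (genSet n M) (wordElt n M w) = w.length := by
    have hle := wordLength_wordElt_le (M := M) w
    have hstep := wordLength_mul_toGen_eq_or hn hlarge hsymm (wordElt n M w) a
    omega
  rw [IsGeodesic, wordElt_append_replicate, wordLength_mul_toGen_pow hn hlarge hsymm (by omega), hw,
    List.length_append, List.length_replicate]

end ArtinRD
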